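/- arXiv:2001.08265 — 2 statements merged into one kernel-verified Lean document; each statement's English description precedes it below -/
import Mathlib

section
/- Suppose F satisfies (G1) and (G2) and the Perron–Frobenius operator P_σ of the base shift has spectral gap on d_θ-Lipschitz functions, and let μ₀ be the unique F-invariant probability measure in S^∞. Then there exist constants K > 0 and ξ ∈ (0,1) (the constants of the spectral gap of F^* on S^∞) such that for all functions g, f : Σ_A^+ × K → ℝ that are Lipschitz with respect to the metric d_θ + d, and all n ≥ 1, |∫ (g∘F^n)·f dμ₀ − ∫ g dμ₀ · ∫ f dμ₀| ≤ ‖fμ₀‖_{S^∞} · K · max{Lip(g), ‖g‖_∞} · ξ^n. -/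
open MeasureTheory ENNReal Set

namespace RDS

/-- The one-sided subshift of finite type `Σ_A^+` determined by the 0-1 matrix `A`. -/
abbrev SigmaA (N : ℕ) (A : Fin N → Fin N → Bool) :=
  {x : ℕ → Fin N // ∀ i, A (x i) (x (i + 1)) = true}

variable {N : ℕ} {A : Fin N → Fin N → Bool}

/-- The shift map `σ` on `Σ_A^+`. -/
def shift (x : SigmaA N A) : SigmaA N A :=
  ⟨fun i => x.val (i + 1), fun i => x.prop (i + 1)⟩

/-- Aperiodicity of a 0-1 matrix: some power has all entries positive. -/
def Aperiodic (A : Fin N → Fin N → Bool) : Prop :=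
  ∃ k : ℕ, 0 < k ∧ ∀ i j,
    0 < ((Matrix.of fun a b => if A a b then (1 : ℕ) else 0) ^ k) i j

/-- The metric `d_θ(x,y) = Σ_i θ^i (1 - δ(x_i, y_i))` on `Σ_A^+`. -/
noncomputable def dTheta (θ : ℝ) (x y : SigmaA N A) : ℝ :=
  ∑' i : ℕ, θ ^ i * (if x.val i = y.val i then (0 : ℝ) else 1)

/-- Cylinder sets of `Σ_A^+`. -/
def cylinder (n : ℕ) (w : Fin (n + 1) → Fin N) : Set (SigmaA N A) :=
  {x | ∀ i : Fin (n + 1), x.val i = w i}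

/-- `m` is a Markov measure on `Σ_A^+` compatible with `A`: it is given on
cylinders by a stochastic matrix `P` (vanishing where `A` vanishes) and a
stationary probability vector `p`. -/
def IsMarkov (m : Measure (SigmaA N A)) : Prop :=
  ∃ (p : Fin N → ℝ≥0∞) (P : Fin N → Fin N → ℝ≥0∞),
    (∑ i, p i = 1) ∧ (∀ i, ∑ j, P i j = 1) ∧ (∀ j, ∑ i, p i * P i j = p j) ∧
    (∀ i j, A i j = false → P i j = 0) ∧
    ∀ (n : ℕ) (w : Fin (n + 1) → Fin N),
      m (cylinder n w) = p (w 0) * ∏ i : Fin n, P (w i.castSucc) (w i.succ)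

/-- `σ_i⁻¹(γ)`: the sequence `γ` with the symbol `i` prepended
(defined when `A i γ₀ = 1`), i.e. the inverse branch of the restriction `σ_i`
of `σ` to the cylinder `[i]`. -/
def prepend (i : Fin N) (x : SigmaA N A) (h : A i (x.val 0) = true) : SigmaA N A :=
  ⟨fun n => match n with
    | 0 => i
    | Nat.succ k => x.val k,
   fun j => match j with
    | 0 => h
    | Nat.succ k => x.prop k⟩

/-- `f` is `L`-Lipschitz with respect to the distance function `d`. -/
def LipWithD {X : Type*} (d : X → X → ℝ) (L : ℝ) (f : X → ℝ) : Prop :=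
  ∀ x y, |f x - f y| ≤ L * d x y

/-- `f` is Lipschitz with respect to the distance function `d`. -/
def LipD {X : Type*} (d : X → X → ℝ) (f : X → ℝ) : Prop :=
  ∃ L : ℝ, LipWithD d L f

/-- The best Lipschitz constant of `f` with respect to `d` (valued in `ℝ≥0∞`). -/
noncomputable def lipConst {X : Type*} (d : X → X → ℝ) (f : X → ℝ) : ℝ≥0∞ :=
  ⨆ (x : X) (y : X), ENNReal.ofReal (|f x - f y| / d x y)

/-- The sup norm of `f` (valued in `ℝ≥0∞`). -/
noncomputable def supNormE {X : Type*} (f : X → ℝ) : ℝ≥0∞ :=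
  ⨆ x : X, ENNReal.ofReal |f x|

/-- The norm `‖f‖_θ = ‖f‖_∞ + Lip_d(f)`. -/
noncomputable def thetaNorm {X : Type*} (d : X → X → ℝ) (f : X → ℝ) : ℝ≥0∞ :=
  supNormE f + lipConst d f

/-- The Perron-Frobenius operator duality characterizing `P_σ`:
`∫ P_σ(φ) · ψ dm = ∫ φ · (ψ ∘ σ) dm` for integrable `φ` and bounded measurable `ψ`. -/
def IsPerronFrobenius (m : Measure (SigmaA N A))
    (Pσ : (SigmaA N A → ℝ) → SigmaA N A → ℝ) : Prop :=
  ∀ φ ψ : SigmaA N A → ℝ, Integrable φ m → Measurable ψ → (∃ C, ∀ x, |ψ x| ≤ C) →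
    ∫ x, Pσ φ x * ψ x ∂m = ∫ x, φ x * ψ (shift x) ∂m

/-- Spectral gap for `P_σ` on `d_θ`-Lipschitz functions with constants `D`, `r`:
`‖P_σ^n φ‖_θ ≤ D r^n ‖φ‖_θ` for all `n` and all `d_θ`-Lipschitz `φ` with
`∫ φ dm = 0`. -/
def HasGap (m : Measure (SigmaA N A)) (θ : ℝ)
    (Pσ : (SigmaA N A → ℝ) → SigmaA N A → ℝ) (D r : ℝ) : Prop :=
  ∀ φ : SigmaA N A → ℝ, LipD (dTheta θ) φ → (∫ x, φ x ∂m) = 0 →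
    ∀ n : ℕ, thetaNorm (dTheta θ) (Pσ^[n] φ) ≤
      ENNReal.ofReal (D * r ^ n) * thetaNorm (dTheta θ) φ

/-- `Jm i` is the Jacobian `J_{m,σ_i}` of `m` with respect to the branch `σ_i`
(the restriction of `σ` to the cylinder `[i]`): `m (σ_i(E)) = ∫_E J_{m,σ_i} dm`
for every measurable `E` (intersected with `[i]`). -/
def IsJacobian (m : Measure (SigmaA N A)) (Jm : Fin N → SigmaA N A → ℝ) : Prop :=
  ∀ (i : Fin N) (E : Set (SigmaA N A)), MeasurableSet E →
    m {γ : SigmaA N A | ∃ h : A i (γ.val 0) = true, prepend i γ h ∈ E} =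
      ∫⁻ x in E ∩ {x : SigmaA N A | x.val 0 = i}, ENNReal.ofReal (Jm i x) ∂m

variable {K : Type*} [MetricSpace K] [MeasurableSpace K]

/-- The Wasserstein-Kantorovich like distance `W(ν₁,ν₂)`: the supremum of
`|∫ g dν₁ - ∫ g dν₂|` over `g : K → ℝ` with `Lip(g) ≤ 1` and `‖g‖_∞ ≤ 1`.
Applied with `ν₂ = 0` it gives the norm `‖ν₁‖_W`; applied to the two parts of a
decomposition of a signed measure it gives its `‖·‖_W` norm. -/
noncomputable def wDist (ν₁ ν₂ : Measure K) : ℝ≥0∞ :=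
  ⨆ g : {g : K → ℝ // LipschitzWith 1 g ∧ ∀ z, |g z| ≤ 1},
    ENNReal.ofReal |∫ z, g.val z ∂ν₁ - ∫ z, g.val z ∂ν₂|

/-- The skew product `F(x,z) = (σ(x), G(x,z))`. -/
def skew (G : SigmaA N A × K → K) (p : SigmaA N A × K) : SigmaA N A × K :=
  (shift p.1, G p)

/-- The transfer operator `F^* μ (E) = μ (F⁻¹ E)` acting on signed measures. -/
noncomputable def transfer (G : SigmaA N A × K → K)
    (μ : SignedMeasure (SigmaA N A × K)) : SignedMeasure (SigmaA N A × K) :=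
  μ.map (skew G)

/-- Condition (G1): uniform contraction of the vertical fibers with rate `α`. -/
def CondG1 (G : SigmaA N A × K → K) (α : ℝ) : Prop :=
  ∀ (x : SigmaA N A) (z₁ z₂ : K), dist (G (x, z₁)) (G (x, z₂)) ≤ α * dist z₁ z₂

/-- Condition (G2): `x ↦ G(x,z)` is `d_θ`-Lipschitz with constant `H`,
uniformly in `z`. -/
def CondG2 (θ : ℝ) (G : SigmaA N A × K → K) (H : ℝ) : Prop :=
  ∀ (z : K) (x y : SigmaA N A), dist (G (x, z)) (G (y, z)) ≤ H * dTheta θ x y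

/-- `T` is (the path `γ ↦ μ|_γ` of) a disintegration of `μ` along the vertical
fibers, over the reference measure `m`: `μ(E) = ∫ (μ|_γ)(E ∩ γ) dm(γ)`. -/
def IsDisint (m : Measure (SigmaA N A)) (μ : Measure (SigmaA N A × K))
    (T : SigmaA N A → Measure K) : Prop :=
  (∀ E : Set (SigmaA N A × K), MeasurableSet E →
      μ E = ∫⁻ γ, T γ {z | (γ, z) ∈ E} ∂m) ∧
  ∀ E : Set K, MeasurableSet E → Measurable fun γ => T γ E

/-- The (essential) `‖·‖_W`-Lipschitz constant of a path of measures,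
`|Γ|_θ^ω = ess sup_{γ₁ ≠ γ₂} ‖Γ(γ₁) - Γ(γ₂)‖_W / d_θ(γ₁,γ₂)`. -/
noncomputable def pathLip (m : Measure (SigmaA N A)) (θ : ℝ)
    (T : SigmaA N A → Measure K) : ℝ≥0∞ :=
  essSup (fun p : SigmaA N A × SigmaA N A =>
    wDist (T p.1) (T p.2) / ENNReal.ofReal (dTheta θ p.1 p.2)) (m.prod m)

/-- The Lipschitz constant `|μ|_θ` of a positive measure: the infimum over
disintegrations `ω` of `μ` of `|μ|_θ^ω`. -/
noncomputable def lipDisint (m : Measure (SigmaA N A)) (θ : ℝ)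
    (μ : Measure (SigmaA N A × K)) : ℝ≥0∞ :=
  ⨅ T : {T : SigmaA N A → Measure K // IsDisint m μ T}, pathLip m θ T.val

/-- The fiberwise transfer formula: the path representing `F^*μ` induced by the
path `T` representing `μ`, i.e.
`γ ↦ Σ_i 1_{σ([i])}(γ) (F_{iγ})_*(T(iγ)) / J_{m,σ_i}(iγ)`. -/
noncomputable def transferPath (G : SigmaA N A × K → K) (Jm : Fin N → SigmaA N A → ℝ)
    (T : SigmaA N A → Measure K) : SigmaA N A → Measure K :=
  fun γ => ∑ i : Fin N, if h : A i (γ.val 0) = true then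
      ENNReal.ofReal ((Jm i (prepend i γ h))⁻¹) •
        ((T (prepend i γ h)).map fun z => G (prepend i γ h, z))
    else 0

variable [BorelSpace K] [CompactSpace K] [Nonempty K]

/-- The fiberwise restriction `μ|_γ = π₂_* (φ₁(γ) μ_γ)` of a finite positive
measure `μ` on `Σ_A^+ × K`, where `({μ_γ}_γ, φ₁ m)` is the Rokhlin
disintegration of `μ` along the vertical fibers and `φ₁ = d(π₁_*μ)/dm`. -/
noncomputable def fiberR (m : Measure (SigmaA N A))
    (μ : Measure (SigmaA N A × K)) (γ : SigmaA N A) : Measure K := by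
  by_cases h : IsFiniteMeasure μ
  · haveI := h
    exact (μ.fst.rnDeriv m γ) • μ.condKernel γ
  · exact 0

/-- The norm `‖μ‖_∞ = ess sup_γ ‖μ|_γ‖_W` of a signed measure written as a
difference `μ = μ₁ - μ₂` of positive measures. -/
noncomputable def infNormPair (m : Measure (SigmaA N A))
    (μ₁ μ₂ : Measure (SigmaA N A × K)) : ℝ≥0∞ :=
  essSup (fun γ => wDist (fiberR m μ₁ γ) (fiberR m μ₂ γ)) m

/-- The marginal density `φ₁ = d(π₁_*μ)/dm` of the signed measure `μ = μ₁ - μ₂`. -/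
noncomputable def phiPair (m : Measure (SigmaA N A))
    (μ₁ μ₂ : Measure (SigmaA N A × K)) (γ : SigmaA N A) : ℝ :=
  (μ₁.fst.rnDeriv m γ).toReal - (μ₂.fst.rnDeriv m γ).toReal

/-- Membership in `AB`: both parts are finite with first marginal absolutely
continuous with respect to `m`. -/
def MemABPair (m : Measure (SigmaA N A)) (μ₁ μ₂ : Measure (SigmaA N A × K)) : Prop :=
  μ₁.fst ≪ m ∧ μ₂.fst ≪ m ∧ IsFiniteMeasure μ₁ ∧ IsFiniteMeasure μ₂

/-- Membership in `S^∞`: `μ ∈ AB`, `‖μ‖_∞ < ∞` and the marginal density `φ₁`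
has a `d_θ`-Lipschitz version. -/
def MemSPair (m : Measure (SigmaA N A)) (θ : ℝ)
    (μ₁ μ₂ : Measure (SigmaA N A × K)) : Prop :=
  MemABPair m μ₁ μ₂ ∧ infNormPair m μ₁ μ₂ < ⊤ ∧
    ∃ ψ : SigmaA N A → ℝ, ψ =ᵐ[m] phiPair m μ₁ μ₂ ∧ LipD (dTheta θ) ψ

/-- `‖φ₁‖_θ`, computed on the best version of the marginal density. -/
noncomputable def thetaNormMu (m : Measure (SigmaA N A)) (θ : ℝ)
    (μ₁ μ₂ : Measure (SigmaA N A × K)) : ℝ≥0∞ :=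
  ⨅ ψ : {ψ : SigmaA N A → ℝ // ψ =ᵐ[m] phiPair m μ₁ μ₂}, thetaNorm (dTheta θ) ψ.val

/-- The norm `‖μ‖_{S^∞} = ‖φ₁‖_θ + ‖μ‖_∞`. -/
noncomputable def sNormPair (m : Measure (SigmaA N A)) (θ : ℝ)
    (μ₁ μ₂ : Measure (SigmaA N A × K)) : ℝ≥0∞ :=
  thetaNormMu m θ μ₁ μ₂ + infNormPair m μ₁ μ₂

/-- Positive part of a signed measure. -/
noncomputable def jPos {X : Type*} [MeasurableSpace X] (μ : SignedMeasure X) : Measure X :=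
  μ.toJordanDecomposition.posPart

/-- Negative part of a signed measure. -/
noncomputable def jNeg {X : Type*} [MeasurableSpace X] (μ : SignedMeasure X) : Measure X :=
  μ.toJordanDecomposition.negPart

/-- Membership in `AB` for signed measures. -/
def MemAB (m : Measure (SigmaA N A)) (μ : SignedMeasure (SigmaA N A × K)) : Prop :=
  MemABPair m (jPos μ) (jNeg μ)

/-- Membership in `S^∞` for signed measures. -/
def MemS (m : Measure (SigmaA N A)) (θ : ℝ) (μ : SignedMeasure (SigmaA N A × K)) : Prop :=
  MemSPair m θ (jPos μ) (jNeg μ)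

/-- `‖μ‖_∞` for signed measures. -/
noncomputable def infNorm (m : Measure (SigmaA N A))
    (μ : SignedMeasure (SigmaA N A × K)) : ℝ≥0∞ :=
  infNormPair m (jPos μ) (jNeg μ)

/-- `‖μ‖_{S^∞}` for signed measures. -/
noncomputable def sNorm (m : Measure (SigmaA N A)) (θ : ℝ)
    (μ : SignedMeasure (SigmaA N A × K)) : ℝ≥0∞ :=
  sNormPair m θ (jPos μ) (jNeg μ)

/-- `‖φ₁‖_∞` of the marginal density of a signed measure. -/
noncomputable def phiSup (m : Measure (SigmaA N A))
    (μ : SignedMeasure (SigmaA N A × K)) : ℝ≥0∞ :=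
  essSup (fun γ => ENNReal.ofReal |phiPair m (jPos μ) (jNeg μ) γ|) m


section Helpers

set_option linter.unusedSectionVars false
set_option linter.unusedVariables false

open Filter Topology

lemma dTheta_summable {θ : ℝ} (h0 : 0 < θ) (h1 : θ < 1) (x y : SigmaA N A) :
    Summable (fun i : ℕ => θ ^ i * (if x.val i = y.val i then (0 : ℝ) else 1)) := by
  refine Summable.of_nonneg_of_le (fun i => ?_) (fun i => ?_)
    (summable_geometric_of_lt_one h0.le h1)
  · split_ifs <;> positivity
  · have : 0 < θ ^ i := by positivity
    split_ifs <;> simp [this.le]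

lemma dTheta_nonneg {θ : ℝ} (h0 : 0 < θ) (x y : SigmaA N A) : 0 ≤ dTheta θ x y := by
  refine tsum_nonneg fun i => ?_
  split_ifs <;> positivity

lemma dTheta_self {θ : ℝ} (x : SigmaA N A) : dTheta θ x x = 0 := by
  simp [dTheta]

lemma dTheta_le {θ : ℝ} (h0 : 0 < θ) (h1 : θ < 1) (x y : SigmaA N A) :
    dTheta θ x y ≤ (1 - θ)⁻¹ := by
  rw [← tsum_geometric_of_lt_one h0.le h1]
  refine (dTheta_summable h0 h1 x y).tsum_le_tsum (fun i => ?_)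
    (summable_geometric_of_lt_one h0.le h1)
  have : 0 < θ ^ i := by positivity
  split_ifs <;> simp [this.le]

lemma eq_of_dTheta {θ : ℝ} (h0 : 0 < θ) (h1 : θ < 1) {x y : SigmaA N A}
    (h : dTheta θ x y = 0) : x = y := by
  have hs := (dTheta_summable h0 h1 x y).hasSum
  have hn : ∀ i : ℕ, 0 ≤ θ ^ i * (if x.val i = y.val i then (0 : ℝ) else 1) := by
    intro i; split_ifs <;> positivity
  change HasSum _ (dTheta θ x y) at hs
  rw [h] at hs
  have := (hasSum_zero_iff_of_nonneg hn).1 hs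
  apply Subtype.ext
  funext i
  by_contra hne
  have h3 := congrFun this i
  simp [hne, h0.ne'] at h3

lemma dTheta_shift {θ : ℝ} (h0 : 0 < θ) (h1 : θ < 1) (x y : SigmaA N A) :
    dTheta θ (shift x) (shift y) ≤ θ⁻¹ * dTheta θ x y := by
  rw [dTheta, dTheta, (dTheta_summable h0 h1 x y).tsum_eq_zero_add]
  have : ∑' b : ℕ, θ ^ (b + 1) * (if x.val (b+1) = y.val (b+1) then (0 : ℝ) else 1)
      = θ * ∑' b : ℕ, θ ^ b * (if x.val (b+1) = y.val (b+1) then (0 : ℝ) else 1) := by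
    rw [← tsum_mul_left]
    congr 1; funext b; ring
  rw [this, mul_add, inv_mul_cancel_left₀ h0.ne']
  refine le_add_of_nonneg_left ?_
  split_ifs <;> simp [h0.le]

lemma dTheta_continuous {θ : ℝ} (h0 : 0 < θ) (h1 : θ < 1) (y : SigmaA N A) :
    Continuous (fun x : SigmaA N A => dTheta θ x y) := by
  refine continuous_tsum (u := fun i => θ ^ i) (fun i => ?_)
    (summable_geometric_of_lt_one h0.le h1) (fun i x => ?_)
  · refine continuous_const.mul ?_
    have h : Continuous (fun x : SigmaA N A => x.val i) :=
      (continuous_apply i).comp continuous_subtype_val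
    exact (continuous_of_discreteTopology
      (f := fun a : Fin N => if a = y.val i then (0 : ℝ) else 1)).comp h
  · have : 0 < θ ^ i := by positivity
    rw [Real.norm_of_nonneg (by split_ifs <;> positivity)]
    split_ifs <;> simp [this.le]

lemma lip_continuous {θ : ℝ} (h0 : 0 < θ) (h1 : θ < 1) {L : ℝ} {φ : SigmaA N A → ℝ}
    (h : LipWithD (dTheta θ) L φ) : Continuous φ := by
  rw [continuous_iff_continuousAt]
  intro y
  rw [ContinuousAt, tendsto_iff_dist_tendsto_zero]
  have hc : Tendsto (fun x => L * dTheta θ x y) (𝓝 y) (𝓝 0) := by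
    have := ((dTheta_continuous h0 h1 y).const_mul L).tendsto y
    simpa [dTheta_self] using this
  exact squeeze_zero (fun _ => dist_nonneg) (fun x => by rw [Real.dist_eq]; exact h x y) hc

lemma lip2_continuous {θ : ℝ} (h0 : 0 < θ) (h1 : θ < 1) {L : ℝ} {f : SigmaA N A × K → ℝ}
    (h : ∀ p q, |f p - f q| ≤ L * (dTheta θ p.1 q.1 + dist p.2 q.2)) : Continuous f := by
  rw [continuous_iff_continuousAt]
  intro y
  rw [ContinuousAt, tendsto_iff_dist_tendsto_zero]
  have hc : Tendsto (fun x : SigmaA N A × K => L * (dTheta θ x.1 y.1 + dist x.2 y.2))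
      (𝓝 y) (𝓝 0) := by
    have h2 : Continuous (fun x : SigmaA N A × K => L * (dTheta θ x.1 y.1 + dist x.2 y.2)) :=
      (((dTheta_continuous h0 h1 y.1).comp continuous_fst).add
        (continuous_snd.dist continuous_const)).const_mul L
    simpa [dTheta_self] using h2.tendsto y
  exact squeeze_zero (fun _ => dist_nonneg) (fun x => by rw [Real.dist_eq]; exact h x y) hc

lemma thetaNorm_bounds {θ : ℝ} (h0 : 0 < θ) (h1 : θ < 1) {φ : SigmaA N A → ℝ} {B : ℝ}
    (hB : 0 ≤ B) (h : thetaNorm (dTheta θ) φ ≤ ENNReal.ofReal B) :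
    (∀ x, |φ x| ≤ B) ∧ LipWithD (dTheta θ) B φ := by
  constructor
  · intro x
    have h2 : ENNReal.ofReal |φ x| ≤ ENNReal.ofReal B :=
      (le_iSup (fun x => ENNReal.ofReal |φ x|) x).trans (le_self_add.trans h)
    exact (ENNReal.ofReal_le_ofReal_iff hB).1 h2
  · intro x y
    rcases eq_or_ne x y with rfl | hne
    · simp [dTheta_self]
    have hd : 0 < dTheta θ x y :=
      lt_of_le_of_ne (dTheta_nonneg h0 x y) fun e => hne (eq_of_dTheta h0 h1 e.symm)
    have h2 : ENNReal.ofReal (|φ x - φ y| / dTheta θ x y) ≤ ENNReal.ofReal B :=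
      (le_iSup₂ (f := fun x y => ENNReal.ofReal (|φ x - φ y| / dTheta θ x y)) x y).trans
        (le_add_self.trans h)
    have h3 := (ENNReal.ofReal_le_ofReal_iff hB).1 h2
    rwa [div_le_iff₀ hd] at h3

lemma thetaNorm_le {θ : ℝ} (h0 : 0 < θ) {φ : SigmaA N A → ℝ} {S L : ℝ}
    (hS : ∀ x, |φ x| ≤ S) (hL0 : 0 ≤ L) (hL : LipWithD (dTheta θ) L φ) :
    thetaNorm (dTheta θ) φ ≤ ENNReal.ofReal S + ENNReal.ofReal L := by
  refine add_le_add (iSup_le fun x => ENNReal.ofReal_le_ofReal (hS x))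
    (iSup₂_le fun x y => ENNReal.ofReal_le_ofReal ?_)
  exact div_le_of_le_mul₀ (dTheta_nonneg h0 x y) hL0 (hL x y)

lemma lip_bounded {θ : ℝ} (h0 : 0 < θ) (h1 : θ < 1) {φ : SigmaA N A → ℝ}
    (h : LipD (dTheta θ) φ) : ∃ B, 0 ≤ B ∧ (∀ x, |φ x| ≤ B) ∧ LipWithD (dTheta θ) B φ := by
  obtain ⟨L, hL⟩ := h
  rcases isEmpty_or_nonempty (SigmaA N A) with he | ⟨⟨x0⟩⟩
  · exact ⟨0, le_rfl, fun x => he.elim x, fun x => he.elim x⟩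
  have hi : 0 ≤ (1 - θ)⁻¹ := inv_nonneg.2 (by linarith)
  have hL' : LipWithD (dTheta θ) |L| φ := fun x y =>
    (hL x y).trans (mul_le_mul_of_nonneg_right (le_abs_self L) (dTheta_nonneg h0 x y))
  refine ⟨|φ x0| + |L| * (1 - θ)⁻¹ + |L|, by positivity, fun x => ?_, fun x y => ?_⟩
  · have a := hL' x x0
    have b := mul_le_mul_of_nonneg_left (dTheta_le h0 h1 x x0) (abs_nonneg L)
    have c := abs_sub_abs_le_abs_sub (φ x) (φ x0)
    have := abs_nonneg L
    linarith
  · refine (hL' x y).trans (mul_le_mul_of_nonneg_right ?_ (dTheta_nonneg h0 x y))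
    have := abs_nonneg (φ x0)
    have : 0 ≤ |L| * (1 - θ)⁻¹ := by positivity
    linarith

lemma shift_measurable : Measurable (shift : SigmaA N A → SigmaA N A) := by
  refine Measurable.subtype_mk (measurable_pi_lambda _ fun i => ?_)
  exact (measurable_pi_apply (i + 1)).comp measurable_subtype_coe

lemma shiftn_measurable (n : ℕ) : Measurable (shift^[n] : SigmaA N A → SigmaA N A) :=
  shift_measurable.iterate n

lemma integrable_bdd {X : Type*} [MeasurableSpace X] {μ : Measure X} [IsFiniteMeasure μ]
    {u : X → ℝ} (hu : Measurable u) {C : ℝ} (hC : ∀ x, |u x| ≤ C) : Integrable u μ :=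
  Integrable.of_bound hu.aestronglyMeasurable C (Eventually.of_forall fun x => by
    simpa [Real.norm_eq_abs] using hC x)

lemma PF_iter {θ : ℝ} (h0 : 0 < θ) (h1 : θ < 1) {m : Measure (SigmaA N A)}
    [IsProbabilityMeasure m]
    {Pσ : (SigmaA N A → ℝ) → SigmaA N A → ℝ} (hPF : IsPerronFrobenius m Pσ)
    (hP : ∀ φ, LipD (dTheta θ) φ → LipD (dTheta θ) (Pσ φ))
    {φ : SigmaA N A → ℝ} (hφ : LipD (dTheta θ) φ) (n : ℕ) :
    LipD (dTheta θ) (Pσ^[n] φ) ∧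
    ∀ ψ : SigmaA N A → ℝ, Measurable ψ → (∃ C, ∀ x, |ψ x| ≤ C) →
    ∫ x, Pσ^[n] φ x * ψ x ∂m = ∫ x, φ x * ψ (shift^[n] x) ∂m := by
  induction n with
  | zero => exact ⟨hφ, fun ψ _ _ => rfl⟩
  | succ n ih =>
    rw [Function.iterate_succ', Function.comp_def]
    refine ⟨hP _ ih.1, fun ψ hm hb => ?_⟩
    obtain ⟨B, _, hB, hL⟩ := lip_bounded h0 h1 ih.1
    rw [hPF _ ψ (integrable_bdd (lip_continuous h0 h1 hL).measurable hB) hm hb,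
      ih.2 (fun x => ψ (shift x)) (hm.comp shift_measurable)
        (hb.imp fun C hC x => hC _)]
    simp only [Function.iterate_succ', Function.comp]

/-! Skew product iterates -/

lemma skew_iter_fst (G : SigmaA N A × K → K) (n : ℕ) (p : SigmaA N A × K) :
    ((skew G)^[n] p).1 = shift^[n] p.1 := by
  induction n with
  | zero => rfl
  | succ n ih => rw [Function.iterate_succ_apply', Function.iterate_succ_apply', skew, ih]

lemma skew_contract {G : SigmaA N A × K → K} {α : ℝ} (ha : 0 < α) (hG1 : CondG1 G α) (n : ℕ)
    (x : SigmaA N A) (z z' : K) :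
    dist ((skew G)^[n] (x, z)).2 ((skew G)^[n] (x, z')).2 ≤ α ^ n * dist z z' := by
  induction n with
  | zero => simp
  | succ n ih =>
    rw [Function.iterate_succ_apply', Function.iterate_succ_apply', skew, skew]
    have e1 : (skew G)^[n] (x, z) = (shift^[n] x, ((skew G)^[n] (x, z)).2) :=
      Prod.ext (skew_iter_fst G n _) rfl
    have e2 : (skew G)^[n] (x, z') = (shift^[n] x, ((skew G)^[n] (x, z')).2) :=
      Prod.ext (skew_iter_fst G n _) rfl
    change dist (G ((skew G)^[n] (x, z))) (G ((skew G)^[n] (x, z'))) ≤ _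
    rw [e1, e2]
    refine (hG1 _ _ _).trans ?_
    rw [pow_succ']
    have := mul_le_mul_of_nonneg_left ih ha.le
    linarith

lemma shiftn_lip {θ : ℝ} (h0 : 0 < θ) (h1 : θ < 1) (n : ℕ) (x y : SigmaA N A) :
    θ ^ n * dTheta θ (shift^[n] x) (shift^[n] y) ≤ dTheta θ x y := by
  induction n with
  | zero => simp
  | succ n ih =>
    rw [Function.iterate_succ_apply', Function.iterate_succ_apply']
    refine le_trans ?_ ih
    have := mul_le_mul_of_nonneg_left (dTheta_shift h0 h1 (shift^[n] x) (shift^[n] y))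
      (pow_nonneg h0.le (n + 1))
    refine this.trans (le_of_eq ?_)
    field_simp; ring

lemma skew_lip {θ : ℝ} (h0 : 0 < θ) (h1 : θ < 1) {G : SigmaA N A × K → K} {α : ℝ}
    (ha : 0 < α) (ha1 : α < 1) (hG1 : CondG1 G α) {H : ℝ} (hG2 : CondG2 θ G H) (n : ℕ)
    (x y : SigmaA N A) (z : K) :
    θ ^ n * dist ((skew G)^[n] (x, z)).2 ((skew G)^[n] (y, z)).2
      ≤ |H| * (1 - θ)⁻¹ * dTheta θ x y := by
  have hi : 0 < (1 - θ)⁻¹ := inv_pos.2 (by linarith)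
  have hd := dTheta_nonneg h0 x y
  induction n with
  | zero =>
    simp only [Function.iterate_zero, id, pow_zero, dist_self, mul_zero]
    positivity
  | succ n ih =>
    rw [Function.iterate_succ_apply', Function.iterate_succ_apply', skew, skew]
    set a := ((skew G)^[n] (x, z)).2 with hadef
    set b := ((skew G)^[n] (y, z)).2 with hbdef
    have e1 : (skew G)^[n] (x, z) = (shift^[n] x, a) := Prod.ext (skew_iter_fst G n _) rfl
    have e2 : (skew G)^[n] (y, z) = (shift^[n] y, b) := Prod.ext (skew_iter_fst G n _) rfl
    change θ ^ (n + 1) * dist (G ((skew G)^[n] (x, z))) (G ((skew G)^[n] (y, z))) ≤ _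
    rw [e1, e2]
    have t := dist_triangle (G (shift^[n] x, a)) (G (shift^[n] x, b)) (G (shift^[n] y, b))
    have t1 : dist (G (shift^[n] x, a)) (G (shift^[n] x, b)) ≤ dist a b := by
      refine (hG1 _ _ _).trans ?_
      have := mul_le_mul_of_nonneg_right ha1.le (dist_nonneg (x := a) (y := b))
      linarith
    have t2 : dist (G (shift^[n] x, b)) (G (shift^[n] y, b)) ≤
        |H| * dTheta θ (shift^[n] x) (shift^[n] y) :=
      (hG2 _ _ _).trans (mul_le_mul_of_nonneg_right (le_abs_self H) (dTheta_nonneg h0 _ _))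
    have t3 := mul_le_mul_of_nonneg_left (shiftn_lip h0 h1 n x y) (abs_nonneg H)
    have hp : 0 < θ ^ n := by positivity
    calc θ ^ (n + 1) * dist (G (shift^[n] x, a)) (G (shift^[n] y, b))
        ≤ θ ^ (n + 1) * (dist a b + |H| * dTheta θ (shift^[n] x) (shift^[n] y)) := by
          gcongr; linarith
      _ = θ * (θ ^ n * dist a b) +
          θ * (|H| * (θ ^ n * dTheta θ (shift^[n] x) (shift^[n] y))) := by ring
      _ ≤ θ * (|H| * (1 - θ)⁻¹ * dTheta θ x y) + θ * (|H| * dTheta θ x y) := by gcongr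
      _ ≤ θ * (|H| * (1 - θ)⁻¹ * dTheta θ x y) + 1 * (|H| * dTheta θ x y) := by gcongr
      _ = |H| * (1 - θ)⁻¹ * dTheta θ x y := by
          have : (1 - θ) ≠ 0 := by linarith
          field_simp; ring

lemma fiber_integral {m : Measure (SigmaA N A)} [IsProbabilityMeasure m]
    {μ : Measure (SigmaA N A × K)} [h : IsFiniteMeasure μ] (hac : μ.fst ≪ m)
    {u : SigmaA N A × K → ℝ} (hu : Integrable u μ) :
    Integrable (fun x => ∫ z, u (x, z) ∂(fiberR m μ x)) m ∧
      ∫ x, ∫ z, u (x, z) ∂(fiberR m μ x) ∂m = ∫ p, u p ∂μ := by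
  have e : ∀ x, ∫ z, u (x, z) ∂(fiberR m μ x) =
      (μ.fst.rnDeriv m x).toReal • ∫ z, u (x, z) ∂(μ.condKernel x) := by
    intro x
    rw [fiberR, dif_pos h, integral_smul_measure]
  have hu' : Integrable u (μ.fst.compProd μ.condKernel) := by
    rwa [Measure.disintegrate]
  simp only [e]
  constructor
  · rw [integrable_rnDeriv_smul_iff hac]
    exact Integrable.integral_compProd (κ := ProbabilityTheory.Kernel.const Unit μ.fst)
      (η := ProbabilityTheory.Kernel.prodMkLeft Unit μ.condKernel) (a := ()) hu'
  · rw [integral_rnDeriv_smul hac, ← Measure.integral_compProd hu', Measure.disintegrate]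

lemma base_integral {m : Measure (SigmaA N A)} [IsProbabilityMeasure m]
    {μ : Measure (SigmaA N A × K)} [h : IsFiniteMeasure μ] (hac : μ.fst ≪ m)
    {u : SigmaA N A → ℝ} (hu : Measurable u) {C : ℝ} (hC : ∀ x, |u x| ≤ C) :
    Integrable (fun x => (μ.fst.rnDeriv m x).toReal * u x) m ∧
      ∫ x, (μ.fst.rnDeriv m x).toReal * u x ∂m = ∫ p, u p.1 ∂μ := by
  constructor
  · exact (integrable_rnDeriv_smul_iff hac).2 (integrable_bdd hu hC)
  · have := integral_rnDeriv_smul hac (f := u)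
    simp only [smul_eq_mul] at this
    rw [this, Measure.fst, integral_map measurable_fst.aemeasurable hu.aestronglyMeasurable]

lemma fiberR_univ {m : Measure (SigmaA N A)}
    {μ : Measure (SigmaA N A × K)} [h : IsFiniteMeasure μ] (x : SigmaA N A) :
    fiberR m μ x Set.univ = μ.fst.rnDeriv m x := by
  rw [fiberR, dif_pos h]; simp

lemma wDist_le_mass (ν₁ ν₂ : Measure K) : wDist ν₁ ν₂ ≤ ν₁ Set.univ + ν₂ Set.univ := by
  by_cases h1 : ν₁ Set.univ = ⊤
  · simp [h1]
  by_cases h2 : ν₂ Set.univ = ⊤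
  · simp [h2]
  refine iSup_le fun g => ?_
  have key : ∀ ν : Measure K, ν Set.univ ≠ ⊤ → |∫ z, g.val z ∂ν| ≤ (ν Set.univ).toReal := by
    intro ν hν
    have : IsFiniteMeasure ν := ⟨lt_top_iff_ne_top.2 hν⟩
    have := norm_integral_le_of_norm_le_const (μ := ν) (f := g.val) (C := 1)
      (Eventually.of_forall fun z => by simpa [Real.norm_eq_abs] using g.2.2 z)
    simpa [Measure.real] using this
  refine ENNReal.ofReal_le_of_le_toReal ?_
  rw [ENNReal.toReal_add h1 h2]
  exact (abs_sub _ _).trans (add_le_add (key _ h1) (key _ h2))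

lemma wDist_bound {ν₁ ν₂ : Measure K} {w : ℝ} (hw0 : 0 ≤ w)
    (hw : wDist ν₁ ν₂ ≤ ENNReal.ofReal w)
    {u : K → ℝ} {C : ℝ} (hC : 0 < C) (hu : ∀ z, |u z| ≤ C)
    (hL : ∀ z z', |u z - u z'| ≤ C * dist z z') :
    |∫ z, u z ∂ν₁ - ∫ z, u z ∂ν₂| ≤ C * w := by
  let g : {g : K → ℝ // LipschitzWith 1 g ∧ ∀ z, |g z| ≤ 1} :=
    ⟨fun z => C⁻¹ * u z, LipschitzWith.of_dist_le_mul fun z z' => by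
      rw [Real.dist_eq, ← mul_sub, abs_mul, abs_of_pos (inv_pos.2 hC), NNReal.coe_one, one_mul,
        inv_mul_le_iff₀ hC]
      exact hL z z', fun z => by
      rw [abs_mul, abs_of_pos (inv_pos.2 hC), inv_mul_le_iff₀ hC, mul_one]
      exact hu z⟩
  have h := (le_iSup (fun g : {g : K → ℝ // LipschitzWith 1 g ∧ ∀ z, |g z| ≤ 1} =>
    ENNReal.ofReal |∫ z, g.val z ∂ν₁ - ∫ z, g.val z ∂ν₂|) g).trans hw
  have h := (ENNReal.ofReal_le_ofReal_iff hw0).1 h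
  simp only [g, integral_const_mul] at h
  rwa [← mul_sub, abs_mul, abs_of_pos (inv_pos.2 hC), inv_mul_le_iff₀ hC] at h

/-- positive part of `f μ₀` -/
noncomputable def mP (μ₀ : Measure (SigmaA N A × K)) (f : SigmaA N A × K → ℝ) :
    Measure (SigmaA N A × K) := μ₀.withDensity fun p => ENNReal.ofReal (f p)

lemma mP_le (μ₀ : Measure (SigmaA N A × K)) {f : SigmaA N A × K → ℝ} {S : ℝ}
    (hS : ∀ p, |f p| ≤ S) : mP μ₀ f ≤ ENNReal.ofReal S • μ₀ := by
  rw [mP, ← withDensity_const]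
  exact withDensity_mono (Eventually.of_forall fun p =>
    ENNReal.ofReal_le_ofReal ((le_abs_self _).trans (hS p)))

lemma mP_finite (μ₀ : Measure (SigmaA N A × K)) [IsProbabilityMeasure μ₀]
    {f : SigmaA N A × K → ℝ} {S : ℝ}
    (hS : ∀ p, |f p| ≤ S) : IsFiniteMeasure (mP μ₀ f) := by
  have : IsFiniteMeasure (ENNReal.ofReal S • μ₀) := μ₀.smul_finite ENNReal.ofReal_ne_top
  exact isFiniteMeasure_of_le _ (mP_le μ₀ hS)

lemma mP_ac {m : Measure (SigmaA N A)} (μ₀ : Measure (SigmaA N A × K)) (hac : μ₀.fst ≪ m)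
    (f : SigmaA N A × K → ℝ) : (mP μ₀ f).fst ≪ m :=
  ((withDensity_absolutelyContinuous _ _).map measurable_fst).trans hac

lemma mP_integral (μ₀ : Measure (SigmaA N A × K)) [IsProbabilityMeasure μ₀]
    {f : SigmaA N A × K → ℝ} {S : ℝ} (hf : Measurable f)
    (hS : ∀ p, |f p| ≤ S) {u : SigmaA N A × K → ℝ} (hu : Measurable u) {C : ℝ}
    (hC : ∀ p, |u p| ≤ C) :
    ∫ p, u p ∂(mP μ₀ f) - ∫ p, u p ∂(mP μ₀ (fun p => - f p)) = ∫ p, u p * f p ∂μ₀ := by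
  have hmax : ∀ (a b c : ℝ), |a| ≤ S → |b| ≤ C → c = max a 0 → |c * b| ≤ S * C := by
    intro a b c ha hb hc
    rw [abs_mul]
    have : |c| ≤ S := by
      rw [hc, abs_of_nonneg (le_max_right _ _)]
      exact max_le ((le_abs_self a).trans ha) ((abs_nonneg a).trans ha)
    exact mul_le_mul this hb (abs_nonneg _) ((abs_nonneg _).trans this)
  have hfn : Measurable (fun p => - f p) := hf.neg
  rw [mP, mP, integral_withDensity_eq_integral_toReal_smul hf.ennreal_ofReal (by simp),
    integral_withDensity_eq_integral_toReal_smul hfn.ennreal_ofReal (by simp), ← integral_sub]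
  · refine integral_congr_ae (Eventually.of_forall fun p => ?_)
    simp only [smul_eq_mul, ENNReal.toReal_ofReal', Pi.neg_apply]
    rcases le_total 0 (f p) with h | h
    · rw [max_eq_left h, max_eq_right (by linarith)]; ring
    · rw [max_eq_right h, max_eq_left (by linarith)]; ring
  · refine integrable_bdd (C := S * C) (hf.ennreal_ofReal.ennreal_toReal.smul hu) fun p => ?_
    exact hmax (f p) _ _ (hS p) (hC p) (by simp [ENNReal.toReal_ofReal'])
  · refine integrable_bdd (C := S * C) (hfn.ennreal_ofReal.ennreal_toReal.smul hu) fun p => ?_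
    exact hmax (-f p) _ _ (by simpa using hS p) (hC p) (by simp [ENNReal.toReal_ofReal'])

/-- base integrals against the marginal density of `f μ₀` -/
lemma phi_integral {m : Measure (SigmaA N A)} [IsProbabilityMeasure m]
    (μ₀ : Measure (SigmaA N A × K)) [IsProbabilityMeasure μ₀] (hac : μ₀.fst ≪ m)
    {f : SigmaA N A × K → ℝ} {S : ℝ} (hf : Measurable f)
    (hS : ∀ p, |f p| ≤ S) {u : SigmaA N A → ℝ} (hu : Measurable u) {C : ℝ}
    (hC : ∀ p, |u p| ≤ C) :
    ∫ x, phiPair m (mP μ₀ f) (mP μ₀ (fun p => - f p)) x * u x ∂m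
      = ∫ p, u p.1 * f p ∂μ₀ := by
  have := mP_finite μ₀ hS
  have hS' : ∀ p, |(fun p => - f p) p| ≤ S := fun p => by simpa using hS p
  have := mP_finite μ₀ hS'
  obtain ⟨a1, a2⟩ := base_integral (mP_ac μ₀ hac f) hu hC
  obtain ⟨b1, b2⟩ := base_integral (mP_ac μ₀ hac (fun p => - f p)) hu hC
  rw [← mP_integral (u := fun p => u p.1) μ₀ hf hS (hu.comp measurable_fst) (fun p => hC p.1)]
  rw [← a2, ← b2, ← integral_sub a1 b1]
  simp only [phiPair, sub_mul]

lemma phi0_integral {m : Measure (SigmaA N A)} [IsProbabilityMeasure m]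
    (μ₀ : Measure (SigmaA N A × K)) [IsProbabilityMeasure μ₀] (hac : μ₀.fst ≪ m)
    {φ0 : SigmaA N A → ℝ} (hφ : φ0 =ᵐ[m] phiPair m μ₀ 0)
    {u : SigmaA N A → ℝ} (hu : Measurable u) {C : ℝ}
    (hC : ∀ p, |u p| ≤ C) :
    ∫ x, φ0 x * u x ∂m = ∫ p, u p.1 ∂μ₀ := by
  obtain ⟨a1, a2⟩ := base_integral hac hu hC
  rw [← a2]
  refine integral_congr_ae ?_
  have hz : (0 : Measure (SigmaA N A × K)).fst.rnDeriv m =ᵐ[m] 0 := by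
    rw [Measure.fst_zero]; exact Measure.rnDeriv_zero m
  filter_upwards [hφ, hz] with x hx hzx
  rw [hx, phiPair, hzx]; simp

/-- finiteness of the `‖·‖_∞` norm of `f μ₀` -/
lemma infNorm_lt {m : Measure (SigmaA N A)} [IsProbabilityMeasure m]
    (μ₀ : Measure (SigmaA N A × K)) [IsProbabilityMeasure μ₀] (hac : μ₀.fst ≪ m)
    {φ0 : SigmaA N A → ℝ} (hφ : φ0 =ᵐ[m] phiPair m μ₀ 0) {B : ℝ} (hB : ∀ x, |φ0 x| ≤ B)
    {f : SigmaA N A × K → ℝ} {S : ℝ} (hS : ∀ p, |f p| ≤ S) :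
    infNormPair m (mP μ₀ f) (mP μ₀ (fun p => - f p)) < ⊤ := by
  have hz : (0 : Measure (SigmaA N A × K)).fst.rnDeriv m =ᵐ[m] 0 := by
    rw [Measure.fst_zero]; exact Measure.rnDeriv_zero m
  have hb : ∀ᵐ x ∂m, μ₀.fst.rnDeriv m x ≤ ENNReal.ofReal B := by
    filter_upwards [hφ, hz, Measure.rnDeriv_lt_top μ₀.fst m] with x hx hzx ht
    have h1 := hB x
    rw [hx, phiPair, hzx] at h1
    rw [← ENNReal.ofReal_toReal ht.ne]
    refine ENNReal.ofReal_le_ofReal ?_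
    simpa using (le_abs_self _).trans h1
  have h0 : μ₀.fst ≤ ENNReal.ofReal B • m := by
    rw [← Measure.withDensity_rnDeriv_eq _ _ hac, ← withDensity_const]
    exact withDensity_mono hb
  have key : ∀ f : SigmaA N A × K → ℝ, (∀ p, |f p| ≤ S) → ∀ᵐ x ∂m, (mP μ₀ f).fst.rnDeriv m x
      ≤ ENNReal.ofReal S * ENNReal.ofReal B := by
    intro f hS
    have := mP_finite μ₀ hS
    have h2 : (mP μ₀ f).fst ≤ (ENNReal.ofReal S * ENNReal.ofReal B) • m := by
      have h3 : (mP μ₀ f).fst ≤ (ENNReal.ofReal S • μ₀).fst :=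
        Measure.map_mono (mP_le μ₀ hS) measurable_fst
      refine h3.trans ?_
      rw [Measure.fst, Measure.map_smul, mul_smul]
      intro s
      simp only [Measure.smul_apply, smul_eq_mul]
      exact mul_le_mul_right (h0 s) _
    refine ae_le_of_forall_setLIntegral_le_of_sigmaFinite (Measure.measurable_rnDeriv _ _) ?_
    intro s hs _
    rw [← withDensity_apply _ hs, Measure.withDensity_rnDeriv_eq _ _ (mP_ac μ₀ hac f)]
    simpa using h2 s
  have := mP_finite μ₀ hS
  have hS' : ∀ p, |(fun p => - f p) p| ≤ S := fun p => by simpa using hS p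
  have := mP_finite μ₀ hS'
  refine lt_of_le_of_lt (essSup_le_of_ae_le (ENNReal.ofReal S * ENNReal.ofReal B +
    ENNReal.ofReal S * ENNReal.ofReal B) ?_) ?_
  · filter_upwards [key _ hS, key _ hS'] with x h1 h2
    refine (wDist_le_mass _ _).trans ?_
    rw [fiberR_univ, fiberR_univ]
    exact add_le_add h1 h2
  · exact ENNReal.add_lt_top.2 ⟨ENNReal.mul_lt_top ENNReal.ofReal_lt_top ENNReal.ofReal_lt_top,
      ENNReal.mul_lt_top ENNReal.ofReal_lt_top ENNReal.ofReal_lt_top⟩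


lemma exists_version {θ : ℝ} (h0 : 0 < θ) (h1 : θ < 1)
    {m : Measure (SigmaA N A)} [IsProbabilityMeasure m]
    {G : SigmaA N A × K → K} (hGm : Measurable (skew G))
    (hdist : ∀ z z' : K, dist z z' ≤ 1)
    {α : ℝ} (ha : 0 < α) (ha1 : α < 1) (hG1 : CondG1 G α)
    {H : ℝ} (hG2 : CondG2 θ G H)
    {Pσ : (SigmaA N A → ℝ) → SigmaA N A → ℝ} (hPF : IsPerronFrobenius m Pσ)
    (hP : ∀ φ, LipD (dTheta θ) φ → LipD (dTheta θ) (Pσ φ))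
    {C₂ : ℝ} (hC₂ : 0 < C₂)
    (hLY : ∀ φ : SigmaA N A → ℝ, LipD (dTheta θ) φ → ∀ n : ℕ, 1 ≤ n →
      thetaNorm (dTheta θ) (Pσ^[n] φ) ≤
        ENNReal.ofReal (θ ^ n) * thetaNorm (dTheta θ) φ +
          ENNReal.ofReal C₂ * supNormE φ)
    (μ₀ : Measure (SigmaA N A × K)) [IsProbabilityMeasure μ₀] (hac : μ₀.fst ≪ m)
    (hinv : μ₀.map (skew G) = μ₀)
    {φ0 : SigmaA N A → ℝ} (hφ : φ0 =ᵐ[m] phiPair m μ₀ 0) {B0 : ℝ} (hB00 : 0 ≤ B0)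
    (hB0 : ∀ x, |φ0 x| ≤ B0) (hL0 : LipWithD (dTheta θ) B0 φ0)
    {f : SigmaA N A × K → ℝ} {S Lf : ℝ} (hS : ∀ p, |f p| ≤ S) (hLf0 : 0 ≤ Lf)
    (hLf : ∀ p q, |f p - f q| ≤ Lf * (dTheta θ p.1 q.1 + dist p.2 q.2)) :
    ∃ ψ : SigmaA N A → ℝ, ψ =ᵐ[m] phiPair m (mP μ₀ f) (mP μ₀ (fun p => - f p)) ∧
      ∃ B, 0 ≤ B ∧ (∀ x, |ψ x| ≤ B) ∧ LipWithD (dTheta θ) B ψ := by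
  obtain ⟨z0⟩ := ‹Nonempty K›
  have hf : Measurable f := (lip2_continuous h0 h1 hLf).measurable
  have hmne : Nonempty (SigmaA N A) := nonempty_of_isProbabilityMeasure m
  obtain ⟨x0⟩ := hmne
  have hS0 : 0 ≤ S := (abs_nonneg _).trans (hS (x0, z0))
  have hi : 0 < (1 - θ)⁻¹ := inv_pos.2 (by linarith)
  let h : ℕ → SigmaA N A → ℝ := fun n x => f ((skew G)^[n] (x, z0))
  have hhm : ∀ n, Measurable (h n) := fun n =>
    hf.comp ((hGm.iterate n).comp (measurable_id.prodMk measurable_const))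
  set c : ℝ := Lf * (1 + |H| * (1 - θ)⁻¹) with hc
  have hc0 : 0 ≤ c := by positivity
  have hhl : ∀ n x y, θ ^ n * |h n x - h n y| ≤ c * dTheta θ x y := by
    intro n x y
    have a1 := hLf ((skew G)^[n] (x, z0)) ((skew G)^[n] (y, z0))
    rw [skew_iter_fst, skew_iter_fst] at a1
    have a2 := shiftn_lip h0 h1 n x y
    have a3 := skew_lip h0 h1 ha ha1 hG1 hG2 n x y z0
    calc θ ^ n * |h n x - h n y| ≤ θ ^ n * (Lf * (dTheta θ (shift^[n] x) (shift^[n] y) +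
          dist ((skew G)^[n] (x, z0)).2 ((skew G)^[n] (y, z0)).2)) := by
          gcongr
      _ = Lf * (θ ^ n * dTheta θ (shift^[n] x) (shift^[n] y) +
          θ ^ n * dist ((skew G)^[n] (x, z0)).2 ((skew G)^[n] (y, z0)).2) := by ring
      _ ≤ Lf * (dTheta θ x y + |H| * (1 - θ)⁻¹ * dTheta θ x y) := by gcongr
      _ = c * dTheta θ x y := by rw [hc]; ring
  let v : ℕ → SigmaA N A → ℝ := fun n x => h n x * φ0 x
  have hvS : ∀ n x, |v n x| ≤ S * B0 := fun n x => by
    rw [abs_mul]; exact mul_le_mul (hS _) (hB0 x) (abs_nonneg _) hS0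
  have hvL : ∀ n, LipWithD (dTheta θ) (B0 * c / θ ^ n + S * B0) (v n) := by
    intro n x y
    have hp : 0 < θ ^ n := by positivity
    have b1 : |h n x - h n y| ≤ c / θ ^ n * dTheta θ x y := by
      have := hhl n x y
      rw [div_mul_eq_mul_div, le_div_iff₀ hp]; linarith
    have e : v n x - v n y = (h n x - h n y) * φ0 x + h n y * (φ0 x - φ0 y) := by
      simp only [v]; ring
    rw [e]
    refine (abs_add_le _ _).trans ?_
    rw [abs_mul, abs_mul]
    have d0 := dTheta_nonneg h0 x y
    calc |h n x - h n y| * |φ0 x| + |h n y| * |φ0 x - φ0 y|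
        ≤ (c / θ ^ n * dTheta θ x y) * B0 + S * (B0 * dTheta θ x y) := by
          gcongr
          · exact hB0 x
          · exact hS _
          · exact hL0 x y
      _ = _ := by ring
  set B : ℝ := (S * B0 + (B0 * c + S * B0)) + C₂ * (S * B0) with hBdef
  have hBn : 0 ≤ B := by positivity
  let u : ℕ → SigmaA N A → ℝ := fun n => Pσ^[n + 1] (v (n + 1))
  have huB : ∀ n, (∀ x, |u n x| ≤ B) ∧ LipWithD (dTheta θ) B (u n) := by
    intro n
    refine thetaNorm_bounds h0 h1 hBn ?_
    refine (hLY (v (n + 1)) ⟨_, hvL (n + 1)⟩ (n + 1) (by omega)).trans ?_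
    have hp : 0 < θ ^ (n + 1) := by positivity
    have hp1 : θ ^ (n + 1) ≤ 1 := pow_le_one₀ h0.le h1.le
    have t1 := thetaNorm_le h0 (hvS (n + 1)) (by positivity) (hvL (n + 1))
    have t2 : supNormE (v (n + 1)) ≤ ENNReal.ofReal (S * B0) :=
      iSup_le fun x => ENNReal.ofReal_le_ofReal (hvS (n + 1) x)
    calc _ ≤ ENNReal.ofReal (θ ^ (n + 1)) * (ENNReal.ofReal (S * B0) +
          ENNReal.ofReal (B0 * c / θ ^ (n + 1) + S * B0)) +
          ENNReal.ofReal C₂ * ENNReal.ofReal (S * B0) := by gcongr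
      _ = ENNReal.ofReal (θ ^ (n + 1) * (S * B0 + (B0 * c / θ ^ (n + 1) + S * B0))
          + C₂ * (S * B0)) := by
          rw [← ENNReal.ofReal_add (by positivity) (by positivity),
            ← ENNReal.ofReal_mul (by positivity), ← ENNReal.ofReal_mul (by positivity),
            ← ENNReal.ofReal_add (by positivity) (by positivity)]
      _ ≤ ENNReal.ofReal B := by
          refine ENNReal.ofReal_le_ofReal ?_
          have e : θ ^ (n + 1) * (S * B0 + (B0 * c / θ ^ (n + 1) + S * B0)) =
            θ ^ (n + 1) * (S * B0) + (B0 * c + θ ^ (n + 1) * (S * B0)) := by field_simp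
          rw [e, hBdef]
          have : θ ^ (n + 1) * (S * B0) ≤ 1 * (S * B0) := by gcongr
          linarith
  set Φ := phiPair m (mP μ₀ f) (mP μ₀ (fun p => - f p)) with hΦ
  have := mP_finite μ₀ hS
  have := mP_finite μ₀ (f := fun p => - f p) (S := S) (fun p => by simpa using hS p)
  have hΦm : Measurable Φ :=
    (Measure.measurable_rnDeriv _ _).ennreal_toReal.sub
      (Measure.measurable_rnDeriv _ _).ennreal_toReal
  have hΦi : Integrable Φ m := Measure.integrable_toReal_rnDeriv.sub
    Measure.integrable_toReal_rnDeriv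
  have hum : ∀ n, Measurable (u n) := fun n => (lip_continuous h0 h1 (huB n).2).measurable
  have hui : ∀ n, Integrable (u n) m := fun n => integrable_bdd (hum n) (huB n).1
  -- duality
  have hdual : ∀ n (w : SigmaA N A → ℝ), Measurable w → (∀ x, |w x| ≤ 1) →
      ∫ x, u n x * w x ∂m - ∫ x, Φ x * w x ∂m ≤ Lf * α ^ (n + 1) := by
    intro n w hw hw1
    have hww : Measurable (fun x => w (shift^[n + 1] x)) := hw.comp (shiftn_measurable _)
    rw [(PF_iter h0 h1 hPF hP ⟨_, hvL (n + 1)⟩ (n + 1)).2 w hw ⟨1, hw1⟩,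
      phi_integral μ₀ hac hf hS hw hw1]
    have e1 : ∫ x, v (n + 1) x * w (shift^[n + 1] x) ∂m =
        ∫ p, h (n + 1) p.1 * w (shift^[n + 1] p.1) ∂μ₀ := by
      rw [← phi0_integral μ₀ hac hφ (u := fun x => h (n + 1) x * w (shift^[n + 1] x))
        ((hhm _).mul hww) (C := S * 1) (fun x => by
          rw [abs_mul]; exact mul_le_mul (hS _) (hw1 _) (abs_nonneg _) hS0)]
      congr 1; funext x; simp only [v]; ring
    have hmap : μ₀.map ((skew G)^[n + 1]) = μ₀ := by
      have : MeasurePreserving (skew G) μ₀ μ₀ := ⟨hGm, hinv⟩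
      exact (this.iterate (n + 1)).map_eq
    have e2 : ∫ p, w p.1 * f p ∂μ₀ =
        ∫ p, w (shift^[n + 1] p.1) * f ((skew G)^[n + 1] p) ∂μ₀ := by
      conv_lhs => rw [← hmap]
      rw [integral_map (hGm.iterate _).aemeasurable
        (f := fun p => w p.1 * f p)
        ((hw.comp measurable_fst).mul hf).aestronglyMeasurable]
      simp only [skew_iter_fst]
    rw [e1, e2, ← integral_sub]
    · refine (le_abs_self _).trans ?_
      have := norm_integral_le_of_norm_le_const (μ := μ₀) (C := Lf * α ^ (n + 1))
        (f := fun p => h (n + 1) p.1 * w (shift^[n + 1] p.1) -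
          w (shift^[n + 1] p.1) * f ((skew G)^[n + 1] p))
        (Eventually.of_forall fun p => by
          have e : h (n + 1) p.1 * w (shift^[n + 1] p.1) -
            w (shift^[n + 1] p.1) * f ((skew G)^[n + 1] p) =
            w (shift^[n + 1] p.1) * (h (n + 1) p.1 - f ((skew G)^[n + 1] p)) := by ring
          rw [e, Real.norm_eq_abs, abs_mul]
          have a1 := hLf ((skew G)^[n + 1] (p.1, z0)) ((skew G)^[n + 1] p)
          rw [skew_iter_fst, skew_iter_fst, dTheta_self, zero_add] at a1
          have a2 := skew_contract ha hG1 (n + 1) p.1 z0 p.2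
          have a3 : α ^ (n + 1) * dist z0 p.2 ≤ α ^ (n + 1) * 1 := by
            gcongr; exact hdist _ _
          have a4 : |h (n + 1) p.1 - f ((skew G)^[n + 1] p)| ≤ Lf * α ^ (n + 1) := by
            refine a1.trans ?_
            gcongr
            exact a2.trans (by linarith)
          calc _ ≤ 1 * (Lf * α ^ (n + 1)) := by gcongr; exact hw1 _
            _ = _ := one_mul _)
      simpa [Measure.real] using this
    · refine integrable_bdd (C := S * 1) (((hhm _).comp measurable_fst).mul
        (hww.comp measurable_fst)) fun p => ?_
      rw [abs_mul]; exact mul_le_mul (hS _) (hw1 _) (abs_nonneg _) hS0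
    · refine integrable_bdd (C := 1 * S) ((hww.comp measurable_fst).mul
        (hf.comp (hGm.iterate _))) fun p => ?_
      rw [abs_mul]; exact mul_le_mul (hw1 _) (hS _) (abs_nonneg _) zero_le_one
  have hL1 : ∀ n, ∫ x, |u n x - Φ x| ∂m ≤ Lf * α ^ (n + 1) := by
    intro n
    let w : SigmaA N A → ℝ := fun x => if 0 ≤ u n x - Φ x then 1 else -1
    have hw : Measurable w := Measurable.ite
      (measurableSet_le measurable_const ((hum n).sub hΦm)) measurable_const measurable_const
    have hw1 : ∀ x, |w x| ≤ 1 := fun x => by simp only [w]; split_ifs <;> simp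
    refine le_trans (le_of_eq ?_) (hdual n w hw hw1)
    rw [← integral_sub]
    · congr 1; funext x
      simp only [w]
      split_ifs with hx
      · rw [abs_of_nonneg hx]; ring
      · rw [abs_of_neg (not_le.1 hx)]; ring
    · exact (hui n).mul_bdd hw.aestronglyMeasurable (c := 1) (Eventually.of_forall hw1)
    · exact hΦi.mul_bdd hw.aestronglyMeasurable (c := 1) (Eventually.of_forall hw1)
  have htend : Tendsto (fun n => eLpNorm (u n - Φ) 1 m) atTop (𝓝 0) := by
    have e : ∀ n, eLpNorm (u n - Φ) 1 m ≤ ENNReal.ofReal (Lf * α ^ (n + 1)) := by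
      intro n
      rw [eLpNorm_one_eq_lintegral_enorm, ← ofReal_integral_norm_eq_lintegral_enorm
        ((hui n).sub hΦi)]
      exact ENNReal.ofReal_le_ofReal (hL1 n)
    refine tendsto_of_tendsto_of_tendsto_of_le_of_le tendsto_const_nhds ?_
      (fun _ => zero_le) e
    have : Tendsto (fun n : ℕ => Lf * α ^ (n + 1)) atTop (𝓝 0) := by
      simpa using ((tendsto_pow_atTop_nhds_zero_of_lt_one ha.le ha1).comp
        (tendsto_add_atTop_nat 1)).const_mul Lf
    simpa using ENNReal.tendsto_ofReal this
  obtain ⟨ns, -, hns⟩ := (tendstoInMeasure_of_tendsto_eLpNorm one_ne_zero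
    (fun n => (hum n).aestronglyMeasurable) hΦm.aestronglyMeasurable htend).exists_seq_tendsto_ae
  have bu : ∀ x, IsBoundedUnder (· ≤ ·) atTop (fun i => u (ns i) x) := fun x =>
    isBoundedUnder_of ⟨B, fun i => (abs_le.1 ((huB (ns i)).1 x)).2⟩
  have bl : ∀ x, IsBoundedUnder (· ≥ ·) atTop (fun i => u (ns i) x) := fun x =>
    isBoundedUnder_of ⟨-B, fun i => (abs_le.1 ((huB (ns i)).1 x)).1⟩
  refine ⟨fun x => limsup (fun i => u (ns i) x) atTop, ?_, B, hBn, fun x => ?_, fun x y => ?_⟩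
  · filter_upwards [hns] with x hx
    exact hx.limsup_eq
  · rw [abs_le]
    constructor
    · exact le_limsup_of_frequently_le (Frequently.of_forall fun i =>
        (abs_le.1 ((huB (ns i)).1 x)).1) (bu x)
    · exact limsup_le_of_le (bl x).isCoboundedUnder_le (Eventually.of_forall fun i =>
        (abs_le.1 ((huB (ns i)).1 x)).2)
  · have one : ∀ x y, limsup (fun i => u (ns i) x) atTop ≤
        limsup (fun i => u (ns i) y) atTop + B * dTheta θ x y := by
      intro x y
      refine le_of_forall_pos_lt_add fun ε hε => ?_
      have h2 : ∀ᶠ i in atTop, u (ns i) y < limsup (fun i => u (ns i) y) atTop + ε / 2 :=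
        eventually_lt_of_limsup_lt (by linarith) (bu y)
      refine lt_of_le_of_lt (b := limsup (fun i => u (ns i) y) atTop + ε / 2 + B * dTheta θ x y)
        ?_ (by linarith)
      refine limsup_le_of_le (bl x).isCoboundedUnder_le (h2.mono fun i hi => ?_)
      have := (abs_le.1 ((huB (ns i)).2 x y)).2
      linarith
    have comm : dTheta θ y x = dTheta θ x y := by
      simp only [dTheta, eq_comm]
    have o1 := one x y
    have o2 := one y x
    rw [comm] at o2
    rw [abs_le]
    constructor <;> linarith

/-- The core estimate, for a fixed version `ψ` of the marginal density. -/
lemma core_bound {θ : ℝ} (h0 : 0 < θ) (h1 : θ < 1)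
    {m : Measure (SigmaA N A)} [IsProbabilityMeasure m]
    {G : SigmaA N A × K → K} (hGm : Measurable (skew G))
    (hdist : ∀ z z' : K, dist z z' ≤ 1)
    {α : ℝ} (ha : 0 < α) (ha1 : α < 1) (hG1 : CondG1 G α)
    {Pσ : (SigmaA N A → ℝ) → SigmaA N A → ℝ} (hPF : IsPerronFrobenius m Pσ)
    (hP : ∀ φ, LipD (dTheta θ) φ → LipD (dTheta θ) (Pσ φ))
    {D r : ℝ} (hD : 0 < D) (hr0 : 0 < r) (hr1 : r < 1) (hgap : HasGap m θ Pσ D r)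
    (μ₀ : Measure (SigmaA N A × K)) [IsProbabilityMeasure μ₀] (hac : μ₀.fst ≪ m)
    (hinv : μ₀.map (skew G) = μ₀)
    {φ0 : SigmaA N A → ℝ} (hφ : φ0 =ᵐ[m] phiPair m μ₀ 0) {B0 : ℝ} (hB00 : 0 ≤ B0)
    (hB0 : ∀ x, |φ0 x| ≤ B0) (hL0 : LipWithD (dTheta θ) B0 φ0)
    {f : SigmaA N A × K → ℝ} {S : ℝ} (hf : Measurable f) (hS : ∀ p, |f p| ≤ S)
    {ψ : SigmaA N A → ℝ}
    (hψ : ψ =ᵐ[m] phiPair m (mP μ₀ f) (mP μ₀ (fun p => - f p)))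
    {b : ℝ} (hb0 : 0 ≤ b) (hb : ∀ x, |ψ x| ≤ b) (hbL : LipWithD (dTheta θ) b ψ)
    {w : ℝ} (hw0 : 0 ≤ w)
    (hw : infNormPair m (mP μ₀ f) (mP μ₀ (fun p => - f p)) ≤ ENNReal.ofReal w)
    {g : SigmaA N A × K → ℝ} {M : ℝ} (hM : 0 < M) (hgm : Measurable g)
    (hgS : ∀ p, |g p| ≤ M)
    (hgL : ∀ x z z', |g (x, z) - g (x, z')| ≤ M * dist z z') (k l : ℕ) :
    |(∫ p, g ((skew G)^[k + l] p) * f p ∂μ₀) - (∫ p, g p ∂μ₀) * ∫ p, f p ∂μ₀| ≤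
      M * α ^ (k + l) * w + b * (M * α ^ (k + l)) + M * α ^ k * (b * (1 + B0)) +
        M * (D * r ^ l * (2 * (b * (1 + B0)))) := by
  obtain ⟨z0⟩ := ‹Nonempty K›
  have hSn := mP_finite μ₀ hS
  have hS' : ∀ p, |(fun p => - f p) p| ≤ S := fun p => by simpa using hS p
  have hSn' := mP_finite μ₀ hS'
  have fin : ∀ n (x : SigmaA N A) (z z' : K),
      |g ((skew G)^[n] (x, z)) - g ((skew G)^[n] (x, z'))| ≤ M * α ^ n * dist z z' := by
    intro n x z z'
    have e1 : (skew G)^[n] (x, z) = (shift^[n] x, ((skew G)^[n] (x, z)).2) :=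
      Prod.ext (skew_iter_fst G n _) rfl
    have e2 : (skew G)^[n] (x, z') = (shift^[n] x, ((skew G)^[n] (x, z')).2) :=
      Prod.ext (skew_iter_fst G n _) rfl
    have := hgL (shift^[n] x) ((skew G)^[n] (x, z)).2 ((skew G)^[n] (x, z')).2
    rw [← e1, ← e2] at this
    refine this.trans ?_
    rw [mul_assoc]
    exact mul_le_mul_of_nonneg_left (skew_contract ha hG1 n x z z') hM.le
  have fin1 : ∀ n (x : SigmaA N A) (z z' : K),
      |g ((skew G)^[n] (x, z)) - g ((skew G)^[n] (x, z'))| ≤ M * α ^ n := by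
    intro n x z z'
    refine (fin n x z z').trans ?_
    have := mul_le_mul_of_nonneg_left (hdist z z') (by positivity : 0 ≤ M * α ^ n)
    linarith
  let h : ℕ → SigmaA N A → ℝ := fun n x => g ((skew G)^[n] (x, z0))
  have hhm : ∀ n, Measurable (h n) := fun n =>
    hgm.comp ((hGm.iterate n).comp (measurable_id.prodMk measurable_const))
  have hhS : ∀ n x, |h n x| ≤ M := fun n x => hgS _
  set n := k + l with hn
  let U : SigmaA N A × K → ℝ := fun p => g ((skew G)^[n] p)
  have hUm : Measurable U := hgm.comp (hGm.iterate n)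
  have hUS : ∀ p, |U p| ≤ M := fun p => hgS _
  let V : SigmaA N A × K → ℝ := fun p => U p - h n p.1
  have hVm : Measurable V := hUm.sub ((hhm n).comp measurable_fst)
  have hVS : ∀ p, |V p| ≤ M * α ^ n := fun p => fin1 n p.1 p.2 z0
  have ψm : Measurable ψ := (lip_continuous h0 h1 hbL).measurable
  have φm : Measurable φ0 := (lip_continuous h0 h1 hL0).measurable
  set c := ∫ p, f p ∂μ₀ with hc
  -- ψ integrals
  have hψI : ∀ u : SigmaA N A → ℝ, Measurable u → ∀ C, (∀ x, |u x| ≤ C) →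
      ∫ x, ψ x * u x ∂m = ∫ p, u p.1 * f p ∂μ₀ := by
    intro u hu C hC
    rw [← phi_integral μ₀ hac hf hS hu hC]
    refine integral_congr_ae ?_
    filter_upwards [hψ] with x hx
    rw [hx]
  have hcψ : c = ∫ x, ψ x ∂m := by
    have := hψI (fun _ => 1) measurable_const 1 (by simp)
    simp only [mul_one, one_mul] at this
    rw [hc, this]
  have hφ1 : ∫ x, φ0 x ∂m = 1 := by
    have := phi0_integral μ₀ hac hφ (u := fun _ => 1) measurable_const (C := 1) (by simp)
    simpa using this
  have hcb : |c| ≤ b := by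
    rw [hcψ]
    have := norm_integral_le_of_norm_le_const (μ := m) (f := ψ) (C := b)
      (Eventually.of_forall hb)
    simpa [Measure.real] using this
  -- E1
  have E1 : |∫ p, V p * f p ∂μ₀| ≤ M * α ^ n * w := by
    rw [← mP_integral μ₀ hf hS hVm hVS]
    obtain ⟨a1, a2⟩ := fiber_integral (m := m) (mP_ac μ₀ hac f)
      (integrable_bdd (μ := mP μ₀ f) hVm hVS)
    obtain ⟨b1, b2⟩ := fiber_integral (m := m) (mP_ac μ₀ hac (fun p => - f p))
      (integrable_bdd (μ := mP μ₀ (fun p => - f p)) hVm hVS)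
    rw [← a2, ← b2, ← integral_sub a1 b1]
    have hae : ∀ᵐ x ∂m, wDist (fiberR m (mP μ₀ f) x) (fiberR m (mP μ₀ (fun p => - f p)) x)
        ≤ ENNReal.ofReal w := by
      have h3 := ENNReal.ae_le_essSup (μ := m) (fun x =>
        wDist (fiberR m (mP μ₀ f) x) (fiberR m (mP μ₀ (fun p => - f p)) x))
      exact h3.mono fun x hx => hx.trans hw
    have := norm_integral_le_of_norm_le_const (μ := m) (C := M * α ^ n * w)
      (f := fun x => ∫ z, V (x, z) ∂(fiberR m (mP μ₀ f) x) -
        ∫ z, V (x, z) ∂(fiberR m (mP μ₀ (fun p => - f p)) x))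
      (hae.mono fun x hx => by
        refine wDist_bound hw0 hx (by positivity) (fun z => hVS (x, z)) fun z z' => ?_
        have e : V (x, z) - V (x, z') = g ((skew G)^[n] (x, z)) - g ((skew G)^[n] (x, z')) := by
          simp only [V, U]; ring
        rw [e]; exact fin n x z z')
    simpa [Measure.real] using this
  have E2 : |∫ p, V p ∂μ₀| ≤ M * α ^ n := by
    have := norm_integral_le_of_norm_le_const (μ := μ₀) (f := V) (C := M * α ^ n)
      (Eventually.of_forall hVS)
    simpa [Measure.real] using this
  -- E3
  let χ : SigmaA N A → ℝ := fun x => ψ x - c * φ0 x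
  have χm : Measurable χ := ψm.sub (φm.const_mul c)
  have χb : ∀ x, |χ x| ≤ b * (1 + B0) := by
    intro x
    have a := abs_sub (ψ x) (c * φ0 x)
    rw [abs_mul] at a
    have a2 := mul_le_mul hcb (hB0 x) (abs_nonneg _) hb0
    have a3 := hb x
    simp only [χ]; linarith
  have χL : LipWithD (dTheta θ) (b * (1 + B0)) χ := by
    intro x y
    have e : χ x - χ y = (ψ x - ψ y) - c * (φ0 x - φ0 y) := by simp only [χ]; ring
    have a := abs_sub (ψ x - ψ y) (c * (φ0 x - φ0 y))
    rw [abs_mul] at a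
    have a2 := mul_le_mul hcb (hL0 x y) (abs_nonneg _) hb0
    have a3 := hbL x y
    rw [e]; linarith
  have iψ : Integrable ψ m := integrable_bdd ψm hb
  have iφ : Integrable φ0 m := integrable_bdd φm hB0
  have χ0 : ∫ x, χ x ∂m = 0 := by
    simp only [χ]
    rw [integral_sub iψ (iφ.const_mul c), integral_const_mul, hφ1, ← hcψ]; ring
  have E4 : |∫ x, χ x * h k (shift^[l] x) ∂m| ≤ M * (D * r ^ l * (2 * (b * (1 + B0)))) := by
    rw [← (PF_iter h0 h1 hPF hP ⟨_, χL⟩ l).2 (h k) (hhm k) ⟨M, hhS k⟩]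
    have hg := hgap χ ⟨_, χL⟩ χ0 l
    have ht : thetaNorm (dTheta θ) (Pσ^[l] χ) ≤
        ENNReal.ofReal (D * r ^ l * (2 * (b * (1 + B0)))) := by
      refine hg.trans ?_
      rw [ENNReal.ofReal_mul (p := D * r ^ l) (by positivity)]
      gcongr
      refine (thetaNorm_le h0 χb (by positivity) χL).trans ?_
      rw [← ENNReal.ofReal_add (by positivity) (by positivity), two_mul]
    have hB := (thetaNorm_bounds h0 h1 (by positivity) ht).1
    have := norm_integral_le_of_norm_le_const (μ := m) (C := M * (D * r ^ l * (2 * (b * (1 + B0)))))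
      (f := fun x => Pσ^[l] χ x * h k x)
      (Eventually.of_forall fun x => by
        rw [Real.norm_eq_abs, abs_mul, mul_comm]
        exact mul_le_mul (hhS k x) (hB x) (abs_nonneg _) hM.le)
    simpa [Measure.real] using this
  have ihk : Integrable (fun x => χ x * h k (shift^[l] x)) m :=
    integrable_bdd (C := b * (1 + B0) * M) (χm.mul ((hhm k).comp (shiftn_measurable l)))
      fun x => by rw [abs_mul]; exact mul_le_mul (χb x) (hhS _ _) (abs_nonneg _) (by positivity)
  have ihn : Integrable (fun x => χ x * h n x) m :=
    integrable_bdd (C := b * (1 + B0) * M) (χm.mul (hhm n))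
      fun x => by rw [abs_mul]; exact mul_le_mul (χb x) (hhS _ _) (abs_nonneg _) (by positivity)
  have E3 : |∫ x, χ x * h n x ∂m - ∫ x, χ x * h k (shift^[l] x) ∂m| ≤
      M * α ^ k * (b * (1 + B0)) := by
    rw [← integral_sub ihn ihk]
    have := norm_integral_le_of_norm_le_const (μ := m) (C := M * α ^ k * (b * (1 + B0)))
      (f := fun x => χ x * h n x - χ x * h k (shift^[l] x))
      (Eventually.of_forall fun x => by
        rw [← mul_sub, Real.norm_eq_abs, abs_mul, mul_comm]
        refine mul_le_mul ?_ (χb x) (abs_nonneg _) (by positivity)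
        have e1 : (skew G)^[n] (x, z0) =
            (skew G)^[k] (shift^[l] x, ((skew G)^[l] (x, z0)).2) := by
          rw [hn, Function.iterate_add_apply]
          congr 1
          exact Prod.ext (skew_iter_fst G l _) rfl
        simp only [h]
        rw [e1]
        exact fin1 k _ _ _)
    simpa [Measure.real] using this
  -- assembling
  have hmap : μ₀.map ((skew G)^[n]) = μ₀ := by
    have : MeasurePreserving (skew G) μ₀ μ₀ := ⟨hGm, hinv⟩
    exact (this.iterate n).map_eq
  have e0 : ∫ p, g p ∂μ₀ = ∫ p, U p ∂μ₀ := by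
    conv_lhs => rw [← hmap]
    rw [integral_map (hGm.iterate _).aemeasurable hgm.aestronglyMeasurable]
  have hh1 : Measurable (fun p : SigmaA N A × K => h n p.1) := (hhm n).comp measurable_fst
  have bmul : ∀ (u : SigmaA N A × K → ℝ) (C : ℝ), Measurable u → (∀ p, |u p| ≤ C) →
      Integrable (fun p => u p * f p) μ₀ := by
    intro u C hu hC
    refine integrable_bdd (C := C * S) (hu.mul hf) fun p => ?_
    rw [abs_mul]; exact mul_le_mul (hC p) (hS p) (abs_nonneg _) ((abs_nonneg _).trans (hC p))
  have s1 : ∫ p, U p * f p ∂μ₀ = ∫ p, V p * f p ∂μ₀ + ∫ x, ψ x * h n x ∂m := by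
    rw [hψI (h n) (hhm n) M (hhS n), ← integral_add (bmul V _ hVm hVS)
      (bmul _ M hh1 fun p => hhS n p.1)]
    congr 1; funext p; simp only [V]; ring
  have s2 : ∫ p, U p ∂μ₀ = ∫ p, V p ∂μ₀ + ∫ x, φ0 x * h n x ∂m := by
    rw [phi0_integral μ₀ hac hφ (hhm n) (hhS n), ← integral_add (integrable_bdd hVm hVS)
      (integrable_bdd hh1 fun p => hhS n p.1)]
    congr 1; funext p; simp only [V]; ring
  have s3 : ∫ x, χ x * h n x ∂m = ∫ x, ψ x * h n x ∂m - c * ∫ x, φ0 x * h n x ∂m := by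
    have i1 : Integrable (fun x => ψ x * h n x) m :=
      integrable_bdd (C := b * M) (ψm.mul (hhm n))
      fun x => by rw [abs_mul]; exact mul_le_mul (hb x) (hhS _ _) (abs_nonneg _) (by positivity)
    have i2 : Integrable (fun x => φ0 x * h n x) m :=
      integrable_bdd (C := B0 * M) (φm.mul (hhm n))
      fun x => by rw [abs_mul]; exact mul_le_mul (hB0 x) (hhS _ _) (abs_nonneg _) (by positivity)
    rw [← integral_const_mul, ← integral_sub i1 (i2.const_mul c)]
    congr 1; funext x; simp only [χ]; ring
  have E2' : |c * ∫ p, V p ∂μ₀| ≤ b * (M * α ^ n) := by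
    rw [abs_mul]; exact mul_le_mul hcb E2 (abs_nonneg _) hb0
  change |∫ p, U p * f p ∂μ₀ - _| ≤ _
  rw [e0, s1, s2]
  rw [abs_le] at *
  constructor <;> nlinarith [E1.1, E1.2, E2'.1, E2'.2, E3.1, E3.2, E4.1, E4.2, s3]

end Helpers

/-- **Exponential decay of correlations, existential form.**
Under (G1), (G2) and the spectral gap of `P_σ`, there are `K > 0` and
`ξ ∈ (0,1)` such that for all observables `g, f` Lipschitz with respect to
`d_θ + d`, and all `n ≥ 1`,
`|∫ (g∘F^n) f dμ₀ - ∫ g dμ₀ ∫ f dμ₀| ≤ ‖fμ₀‖_{S^∞} K max{Lip(g),‖g‖_∞} ξ^n`. -/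
theorem exponential_decay_of_correlations
    (N : ℕ) (A : Fin N → Fin N → Bool) (hA : Aperiodic A)
    (θ : ℝ) (hθ0 : 0 < θ) (hθ1 : θ < 1)
    (m : Measure (SigmaA N A)) [IsProbabilityMeasure m]
    (hmM : IsMarkov m) (hminv : m.map shift = m)
    {K : Type*} [MetricSpace K] [CompactSpace K] [Nonempty K]
    [MeasurableSpace K] [BorelSpace K]
    (hdiam : Metric.diam (Set.univ : Set K) = 1)
    (G : SigmaA N A × K → K) (hGm : Measurable (skew G))
    (α : ℝ) (hα0 : 0 < α) (hα1 : α < 1) (hG1 : CondG1 G α)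
    (H : ℝ) (hG2 : CondG2 θ G H)
    (Pσ : (SigmaA N A → ℝ) → SigmaA N A → ℝ) (hPF : IsPerronFrobenius m Pσ)
    (D r : ℝ) (hD : 0 < D) (hr0 : 0 < r) (hr1 : r < 1)
    (hgap : HasGap m θ Pσ D r)
    (C₂ : ℝ) (hC₂ : 0 < C₂)
    (hLY : ∀ φ : SigmaA N A → ℝ, LipD (dTheta θ) φ → ∀ n : ℕ, 1 ≤ n →
      thetaNorm (dTheta θ) (Pσ^[n] φ) ≤
        ENNReal.ofReal (θ ^ n) * thetaNorm (dTheta θ) φ +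
          ENNReal.ofReal C₂ * supNormE φ)
    (μ₀ : Measure (SigmaA N A × K)) (hprob : IsProbabilityMeasure μ₀)
    (hinv : μ₀.map (skew G) = μ₀) (hS : MemSPair m θ μ₀ 0)
    (huniq : ∀ μ' : Measure (SigmaA N A × K),
      IsProbabilityMeasure μ' → μ'.map (skew G) = μ' → MemSPair m θ μ' 0 → μ' = μ₀) :
    ∃ K₀ ξ : ℝ, 0 < K₀ ∧ 0 < ξ ∧ ξ < 1 ∧
      ∀ (g f : SigmaA N A × K → ℝ) (Lg Sg : ℝ),
        (∀ p q, |g p - g q| ≤ Lg * (dTheta θ p.1 q.1 + dist p.2 q.2)) →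
        (∀ p, |g p| ≤ Sg) →
        (∃ Lf : ℝ, ∀ p q, |f p - f q| ≤ Lf * (dTheta θ p.1 q.1 + dist p.2 q.2)) →
        ∀ n : ℕ, 1 ≤ n →
          |(∫ p, g ((skew G)^[n] p) * f p ∂μ₀) -
              (∫ p, g p ∂μ₀) * ∫ p, f p ∂μ₀| ≤
            (sNormPair m θ (μ₀.withDensity fun p => ENNReal.ofReal (f p))
                (μ₀.withDensity fun p => ENNReal.ofReal (-f p))).toReal *
              K₀ * max Lg Sg * ξ ^ n := by
  have hac : μ₀.fst ≪ m := hS.1.1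
  obtain ⟨φ0, hφ, hφL⟩ := hS.2.2
  obtain ⟨B0, hB00, hB0, hL0⟩ := lip_bounded hθ0 hθ1 hφL
  have hdist : ∀ z z' : K, dist z z' ≤ 1 := fun z z' => by
    rw [← hdiam]
    exact Metric.dist_le_diam_of_mem isCompact_univ.isBounded (Set.mem_univ _) (Set.mem_univ _)
  have hP : ∀ φ, LipD (dTheta θ) φ → LipD (dTheta θ) (Pσ φ) := by
    intro φ hL
    obtain ⟨B, hB, hBs, hBL⟩ := lip_bounded hθ0 hθ1 hL
    have h := hLY φ hL 1 le_rfl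
    have t1 := thetaNorm_le hθ0 hBs hB hBL
    have t2 : supNormE φ ≤ ENNReal.ofReal B :=
      iSup_le fun x => ENNReal.ofReal_le_ofReal (hBs x)
    have h2 : thetaNorm (dTheta θ) (Pσ φ) ≤
        ENNReal.ofReal (θ ^ 1 * (B + B) + C₂ * B) := by
      rw [ENNReal.ofReal_add (by positivity) (by positivity), ENNReal.ofReal_mul (by positivity),
        ENNReal.ofReal_mul (by positivity), ENNReal.ofReal_add hB hB]
      exact h.trans (by gcongr)
    exact ⟨_, (thetaNorm_bounds hθ0 hθ1 (by positivity) h2).2⟩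
  obtain ⟨z0⟩ := ‹Nonempty K›
  obtain ⟨x0⟩ : Nonempty (SigmaA N A) := nonempty_of_isProbabilityMeasure m
  have : Nonempty K := ⟨z0⟩
  set ξ : ℝ := Real.sqrt (max α r) with hξ
  have hmx : 0 < max α r := lt_max_of_lt_left hα0
  have hξ0 : 0 < ξ := Real.sqrt_pos.2 hmx
  have hξsq : ξ ^ 2 = max α r := Real.sq_sqrt hmx.le
  have hξ1 : ξ < 1 := by
    rw [hξ, Real.sqrt_lt' one_pos, one_pow]
    exact max_lt hα1 hr1
  refine ⟨(2 + (1 + B0) * (1 + 2 * D)) / ξ, ξ, by positivity, hξ0, hξ1, ?_⟩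
  intro g f Lg Sg hgL hgS ⟨Lf, hLf⟩ n hn
  have hgm : Measurable g := (lip2_continuous hθ0 hθ1 hgL).measurable
  have hfm : Measurable f := (lip2_continuous hθ0 hθ1 hLf).measurable
  have hSg0 : 0 ≤ Sg := (abs_nonneg _).trans (hgS (x0, z0))
  set M := max Lg Sg with hMdef
  have hM0 : 0 ≤ M := hSg0.trans (le_max_right _ _)
  rcases hM0.eq_or_lt with hM | hM
  · have hg0 : ∀ p, g p = 0 := fun p => by
      have := (hgS p).trans (le_max_right Lg Sg)
      rw [← hMdef, ← hM] at this
      exact abs_nonpos_iff.1 this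
    simp [hg0, ← hM]
  -- Lipschitz and sup bounds for f
  have hLf' : ∀ p q, |f p - f q| ≤ |Lf| * (dTheta θ p.1 q.1 + dist p.2 q.2) := fun p q =>
    (hLf p q).trans (mul_le_mul_of_nonneg_right (le_abs_self _)
      (add_nonneg (dTheta_nonneg hθ0 _ _) dist_nonneg))
  have hSf : ∀ p, |f p| ≤ |f (x0, z0)| + |Lf| * ((1 - θ)⁻¹ + 1) := fun p => by
    have a := hLf' p (x0, z0)
    have b := mul_le_mul_of_nonneg_left
      (add_le_add (dTheta_le hθ0 hθ1 p.1 x0) (hdist p.2 z0)) (abs_nonneg Lf)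
    have c := abs_sub_abs_le_abs_sub (f p) (f (x0, z0))
    linarith
  obtain ⟨ψ₁, hψ₁, B₁, hB₁, hψ₁b, hψ₁L⟩ := exists_version hθ0 hθ1 hGm hdist hα0 hα1 hG1 hG2
    hPF hP hC₂ hLY μ₀ hac hinv hφ hB00 hB0 hL0 hSf (abs_nonneg Lf) hLf'
  change _ ≤ (sNormPair m θ (mP μ₀ f) (mP μ₀ (fun p => - f p))).toReal * _ * _ * _
  have hinf := infNorm_lt μ₀ hac hφ hB0 hSf
  set I := infNormPair m (mP μ₀ f) (mP μ₀ (fun p => - f p)) with hI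
  have hth : thetaNormMu m θ (mP μ₀ f) (mP μ₀ (fun p => - f p)) < ⊤ := by
    refine lt_of_le_of_lt (iInf_le _ ⟨ψ₁, hψ₁⟩) ?_
    exact lt_of_le_of_lt (thetaNorm_le hθ0 hψ₁b hB₁ hψ₁L)
      (ENNReal.add_lt_top.2 ⟨ENNReal.ofReal_lt_top, ENNReal.ofReal_lt_top⟩)
  set Θ := thetaNormMu m θ (mP μ₀ f) (mP μ₀ (fun p => - f p)) with hΘ
  have hsum : (sNormPair m θ (mP μ₀ f) (mP μ₀ (fun p => - f p))).toReal =
      Θ.toReal + I.toReal := by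
    rw [sNormPair, ← hΘ, ← hI, ENNReal.toReal_add hth.ne hinf.ne]
  rw [hsum]
  have hw : I ≤ ENNReal.ofReal I.toReal := (ENNReal.ofReal_toReal hinf.ne).ge
  set w := I.toReal with hwdef
  have hw0 : 0 ≤ w := ENNReal.toReal_nonneg
  have hΘ0 : 0 ≤ Θ.toReal := ENNReal.toReal_nonneg
  -- powers
  obtain ⟨k, l, hkl, hk, hl⟩ : ∃ k l : ℕ, k + l = n ∧ n ≤ 2 * k + 1 ∧ n ≤ 2 * l + 1 :=
    ⟨n / 2, n - n / 2, by omega, by omega, by omega⟩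
  have hpow : ∀ (a : ℝ) (j : ℕ), 0 < a → a ≤ max α r → n ≤ 2 * j + 1 → a ^ j ≤ ξ ^ n / ξ := by
    intro a j ha hle hj
    rw [le_div_iff₀ hξ0]
    calc a ^ j * ξ ≤ (ξ ^ 2) ^ j * ξ := by
          gcongr
          rw [hξsq]; exact hle
      _ = ξ ^ (2 * j + 1) := by ring
      _ ≤ ξ ^ n := pow_le_pow_of_le_one hξ0.le hξ1.le hj
  have hak := hpow α k hα0 (le_max_left _ _) hk
  have hrl := hpow r l hr0 (le_max_right _ _) hl
  have han : α ^ (k + l) ≤ ξ ^ n / ξ := by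
    refine le_trans ?_ hak
    exact pow_le_pow_of_le_one hα0.le hα1.le (by omega)
  set X := ξ ^ n / ξ with hX
  have hX0 : 0 < X := by positivity
  have key : ∀ ε : ℝ, 0 < ε → |(∫ p, g ((skew G)^[n] p) * f p ∂μ₀) -
      (∫ p, g p ∂μ₀) * ∫ p, f p ∂μ₀| ≤
      (Θ.toReal + ε + w) * ((2 + (1 + B0) * (1 + 2 * D)) * M * X) := by
    intro ε hε
    have hlt : Θ < ENNReal.ofReal (Θ.toReal + ε) := by
      rw [ENNReal.lt_ofReal_iff_toReal_lt hth.ne]; linarith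
    obtain ⟨⟨ψ, hψ⟩, hψlt⟩ := iInf_lt_iff.1 hlt
    obtain ⟨hb, hbL⟩ := thetaNorm_bounds hθ0 hθ1 (by positivity) hψlt.le
    set b := Θ.toReal + ε with hbdef
    have hb0 : 0 ≤ b := by positivity
    have hgS' : ∀ p, |g p| ≤ M := fun p => (hgS p).trans (le_max_right _ _)
    have hgL' : ∀ x z z', |g (x, z) - g (x, z')| ≤ M * dist z z' := fun x z z' => by
      have := hgL (x, z) (x, z')
      simp only [dTheta_self, zero_add] at this
      exact this.trans (mul_le_mul_of_nonneg_right (le_max_left _ _) dist_nonneg)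
    have := core_bound hθ0 hθ1 hGm hdist hα0 hα1 hG1 hPF hP hD hr0 hr1 hgap μ₀ hac hinv hφ hB00
      hB0 hL0 hfm hSf hψ hb0 hb hbL hw0 hw hM hgm hgS' hgL' k l
    rw [hkl] at this
    rw [hkl] at han
    refine this.trans ?_
    calc _ ≤ M * X * w + b * (M * X) + M * X * (b * (1 + B0)) +
          M * (D * X * (2 * (b * (1 + B0)))) := by gcongr
      _ ≤ _ := by
          have p1 : 0 ≤ M * X * w * ((1 + B0) * (1 + 2 * D) + 1) := by positivity
          have p2 : 0 ≤ M * X * b := by positivity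
          nlinarith
  have e : (Θ.toReal + w) * ((2 + (1 + B0) * (1 + 2 * D)) / ξ) * M * ξ ^ n =
      (Θ.toReal + w) * ((2 + (1 + B0) * (1 + 2 * D)) * M * X) := by
    rw [hX]; ring
  rw [e]
  set Y := (2 + (1 + B0) * (1 + 2 * D)) * M * X with hY
  have hY0 : 0 < Y := by positivity
  refine le_of_forall_pos_le_add fun ε hε => ?_
  have := key (ε / Y) (by positivity)
  refine this.trans (le_of_eq ?_)
  field_simp
  ring

end RDS
end

section
/- Suppose F satisfies (G1). Then for every signed measure μ ∈ S^∞ with marginal density φ₁ = d(π₁_*μ)/dm, it holds ‖F^*μ‖_∞ ≤ α‖μ‖_∞ + ‖φ₁‖_∞. -/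
open MeasureTheory ENNReal Set

namespace RDS

variable {N : ℕ} {A : Fin N → Fin N → Bool}

variable {K : Type*} [MetricSpace K] [MeasurableSpace K]

variable [BorelSpace K] [CompactSpace K] [Nonempty K]

/-! ### Helper lemmas -/

lemma aux_le_of_add_eq {X : Type*} [MeasurableSpace X] {p n a b : Measure X}
    (h : p + b = n + a) (hs : p ⟂ₘ n) : p ≤ a := by
  obtain ⟨s, hsm, hps, hns⟩ := hs
  refine Measure.le_iff.2 fun E hE => ?_
  have h1 : p E ≤ p (E ∩ sᶜ) := by
    calc p E ≤ p (E ∩ sᶜ ∪ s) := measure_mono (by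
            intro x hx
            by_cases hxs : x ∈ s
            · exact Or.inr hxs
            · exact Or.inl ⟨hx, hxs⟩)
      _ ≤ p (E ∩ sᶜ) + p s := measure_union_le _ _
      _ = p (E ∩ sᶜ) := by rw [hps, add_zero]
  have h2 : n (E ∩ sᶜ) = 0 := measure_mono_null inter_subset_right hns
  have h3 : (p + b) (E ∩ sᶜ) = (n + a) (E ∩ sᶜ) := by rw [h]
  rw [Measure.add_apply, Measure.add_apply, h2, zero_add] at h3
  calc p E ≤ p (E ∩ sᶜ) := h1
    _ ≤ p (E ∩ sᶜ) + b (E ∩ sᶜ) := le_self_add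
    _ = a (E ∩ sᶜ) := h3
    _ ≤ a E := measure_mono inter_subset_left

lemma aux_signed_apply {X : Type*} [MeasurableSpace X] (s : SignedMeasure X) {E : Set X}
    (hE : MeasurableSet E) : s E = (jPos s).real E - (jNeg s).real E := by
  conv_lhs => rw [← s.toSignedMeasure_toJordanDecomposition]
  rw [JordanDecomposition.toSignedMeasure, jPos, jNeg, _root_.sub_apply,
    Measure.toSignedMeasure_apply_measurable hE, Measure.toSignedMeasure_apply_measurable hE]

lemma aux_fiberR_eq (m : Measure (SigmaA N A)) (ν : Measure (SigmaA N A × K))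
    [h : IsFiniteMeasure ν] (γ : SigmaA N A) :
    fiberR m ν γ = (ν.fst.rnDeriv m γ) • ν.condKernel γ := by
  simp [fiberR, h]

lemma aux_integral_fiberR (m : Measure (SigmaA N A)) (ν : Measure (SigmaA N A × K))
    [h : IsFiniteMeasure ν] (γ : SigmaA N A) (f : K → ℝ) :
    ∫ z, f z ∂(fiberR m ν γ) = (ν.fst.rnDeriv m γ).toReal • ∫ z, f z ∂(ν.condKernel γ) := by
  rw [aux_fiberR_eq, integral_smul_measure]

lemma aux_fiberR_finite (m : Measure (SigmaA N A)) (ν : Measure (SigmaA N A × K))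
    [h : IsFiniteMeasure ν] :
    ∀ᵐ γ ∂m, IsFiniteMeasure (fiberR m ν γ) ∧
      (fiberR m ν γ).real univ = (ν.fst.rnDeriv m γ).toReal := by
  filter_upwards [Measure.rnDeriv_lt_top ν.fst m] with γ hγ
  rw [aux_fiberR_eq]
  refine ⟨⟨?_⟩, ?_⟩
  · simp [hγ]
  · simp [Measure.real]

lemma aux_integrable_fiber (m : Measure (SigmaA N A)) [IsProbabilityMeasure m]
    (ν : Measure (SigmaA N A × K)) [IsFiniteMeasure ν] (hν : ν.fst ≪ m)
    (f : SigmaA N A × K → ℝ) (hf : Integrable f ν) :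
    Integrable (fun γ => ∫ z, f (γ, z) ∂(fiberR m ν γ)) m := by
  simp_rw [aux_integral_fiberR]
  rw [integrable_rnDeriv_smul_iff hν]
  have hf' : Integrable f (ν.fst.compProd ν.condKernel) := by rwa [ν.disintegrate]
  exact Integrable.integral_compProd (κ := ProbabilityTheory.Kernel.const Unit ν.fst)
    (η := ProbabilityTheory.Kernel.prodMkLeft Unit ν.condKernel) (a := ()) hf'

lemma aux_integral_fiber (m : Measure (SigmaA N A)) [IsProbabilityMeasure m]
    (ν : Measure (SigmaA N A × K)) [IsFiniteMeasure ν] (hν : ν.fst ≪ m)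
    (f : SigmaA N A × K → ℝ) (hf : Integrable f ν) :
    ∫ γ, ∫ z, f (γ, z) ∂(fiberR m ν γ) ∂m = ∫ x, f x ∂ν := by
  simp_rw [aux_integral_fiberR]
  rw [integral_rnDeriv_smul hν]
  have hf' : Integrable f (ν.fst.compProd ν.condKernel) := by rwa [ν.disintegrate]
  rw [← Measure.integral_compProd hf', ν.disintegrate]

lemma aux_setIntegral_fiber (m : Measure (SigmaA N A)) [IsProbabilityMeasure m]
    (ν : Measure (SigmaA N A × K)) [IsFiniteMeasure ν] (hν : ν.fst ≪ m)
    (f : SigmaA N A × K → ℝ) (hf : Integrable f ν) (S : Set (SigmaA N A))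
    (hS : MeasurableSet S) :
    ∫ γ in S, ∫ z, f (γ, z) ∂(fiberR m ν γ) ∂m =
      ∫ x, (Prod.fst ⁻¹' S).indicator f x ∂ν := by
  rw [← aux_integral_fiber m ν hν _ (hf.indicator (measurable_fst hS)), ← integral_indicator hS]
  congr 1
  ext γ
  by_cases hγ : γ ∈ S
  · simp [indicator, hγ]
  · simp [indicator, hγ]

/-- The fiberwise estimate. -/
lemma aux_fiber_bound (hdiam : Metric.diam (Set.univ : Set K) = 1)
    (α : ℝ) (hα0 : 0 < α) (ν₁ ν₂ : Measure K) [IsFiniteMeasure ν₁] [IsFiniteMeasure ν₂]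
    (C B : ℝ) (hC : wDist ν₁ ν₂ ≤ ENNReal.ofReal C) (hC0 : 0 ≤ C)
    (hB : |ν₁.real univ - ν₂.real univ| ≤ B)
    (h : K → ℝ) (hh : ∀ z, |h z| ≤ 1) (hl : ∀ z w, |h z - h w| ≤ α * dist z w) :
    |∫ z, h z ∂ν₁ - ∫ z, h z ∂ν₂| ≤ α * C + B := by
  obtain ⟨z₀⟩ := ‹Nonempty K›
  have hd : ∀ z, dist z z₀ ≤ 1 := fun z => by
    rw [← hdiam]
    exact Metric.dist_le_diam_of_mem isCompact_univ.isBounded (mem_univ _) (mem_univ _)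
  set k : K → ℝ := fun z => (h z - h z₀) / α with hk
  have hkl : LipschitzWith 1 k := by
    refine LipschitzWith.of_dist_le_mul fun z w => ?_
    rw [Real.dist_eq, hk]
    have : (h z - h z₀) / α - (h w - h z₀) / α = (h z - h w) / α := by ring
    simp only [this, abs_div, abs_of_pos hα0, NNReal.coe_one, one_mul]
    rw [div_le_iff₀ hα0, mul_comm]
    exact hl z w
  have hkb : ∀ z, |k z| ≤ 1 := fun z => by
    rw [hk]
    simp only [abs_div, abs_of_pos hα0]
    rw [div_le_one hα0]
    calc _ ≤ α * dist z z₀ := hl z z₀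
      _ ≤ α * 1 := by gcongr; exact hd z
      _ = α := mul_one _
  have hw : |∫ z, k z ∂ν₁ - ∫ z, k z ∂ν₂| ≤ C := by
    have := (le_iSup (fun g : {g : K → ℝ // LipschitzWith 1 g ∧ ∀ z, |g z| ≤ 1} =>
      ENNReal.ofReal |∫ z, g.val z ∂ν₁ - ∫ z, g.val z ∂ν₂|) ⟨k, hkl, hkb⟩).trans hC
    exact (ENNReal.ofReal_le_ofReal_iff hC0).1 this
  have hki : ∀ ν : Measure K, IsFiniteMeasure ν → Integrable k ν := fun ν _ =>
    Integrable.of_bound hkl.continuous.aestronglyMeasurable 1 (ae_of_all _ hkb)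
  have he : ∀ ν : Measure K, IsFiniteMeasure ν →
      ∫ z, h z ∂ν = α * ∫ z, k z ∂ν + h z₀ * ν.real univ := fun ν hν => by
    have : ∀ z, h z = α * k z + h z₀ := fun z => by
      rw [hk]; field_simp; ring
    rw [integral_congr_ae (ae_of_all ν this), integral_add ((hki ν hν).const_mul _) (integrable_const _), integral_const_mul]
    rw [integral_const, smul_eq_mul, mul_comm (ν.real univ)]
  rw [he ν₁ inferInstance, he ν₂ inferInstance]
  calc _ = |α * (∫ z, k z ∂ν₁ - ∫ z, k z ∂ν₂) + h z₀ * (ν₁.real univ - ν₂.real univ)| := by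
        congr 1; ring
    _ ≤ |α * (∫ z, k z ∂ν₁ - ∫ z, k z ∂ν₂)| + |h z₀ * (ν₁.real univ - ν₂.real univ)| :=
        abs_add_le _ _
    _ = α * |∫ z, k z ∂ν₁ - ∫ z, k z ∂ν₂| + |h z₀| * |ν₁.real univ - ν₂.real univ| := by
        rw [abs_mul, abs_mul, abs_of_pos hα0]
    _ ≤ α * C + 1 * B := by
        gcongr
        exact hh z₀
    _ = α * C + B := by ring

lemma aux_exists_countable : ∃ D : Set (K → ℝ), D.Countable ∧
    (∀ g ∈ D, LipschitzWith 1 g ∧ ∀ z, |g z| ≤ 1) ∧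
    ∀ (ν₁ ν₂ : Measure K) [IsFiniteMeasure ν₁] [IsFiniteMeasure ν₂] (c : ℝ),
      (∀ g ∈ D, |∫ z, g z ∂ν₁ - ∫ z, g z ∂ν₂| ≤ c) →
      wDist ν₁ ν₂ ≤ ENNReal.ofReal c := by
  let S : Set C(K, ℝ) := {g | LipschitzWith 1 g ∧ ∀ z, |g z| ≤ 1}
  obtain ⟨D, hDc, hDd⟩ := TopologicalSpace.exists_countable_dense S
  refine ⟨(fun g : S => (g.1 : K → ℝ)) '' D, hDc.image _, ?_, ?_⟩
  · rintro _ ⟨g, _, rfl⟩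
    exact g.2
  · intro ν₁ ν₂ _ _ c hc
    have hcont : ∀ ν : Measure K, IsFiniteMeasure ν → Continuous fun g : S => ∫ z, g.1 z ∂ν := by
      intro ν _
      refine continuous_of_dominated (bound := fun _ => 1)
        (fun g => g.1.continuous.aestronglyMeasurable)
        (fun g => ae_of_all _ fun z => g.2.2 z) (integrable_const _) (ae_of_all _ fun z => ?_)
      exact (continuous_eval_const (F := C(K, ℝ)) z).comp continuous_subtype_val
    have hcl : IsClosed {g : S | |∫ z, g.1 z ∂ν₁ - ∫ z, g.1 z ∂ν₂| ≤ c} :=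
      isClosed_le ((hcont ν₁ inferInstance).sub (hcont ν₂ inferInstance)).abs continuous_const
    have hall : ∀ g : S, |∫ z, g.1 z ∂ν₁ - ∫ z, g.1 z ∂ν₂| ≤ c := fun g =>
      hcl.closure_subset_iff.2 (fun g hg => hc _ ⟨g, hg, rfl⟩) (hDd g)
    refine iSup_le fun g => ENNReal.ofReal_le_ofReal ?_
    exact hall ⟨⟨g.1, g.2.1.continuous⟩, g.2⟩

/-- Under (G1), `‖F^*μ‖_∞ ≤ α ‖μ‖_∞ + ‖φ₁‖_∞` for every
`μ ∈ S^∞`. -/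
theorem transfer_infNorm_LasotaYorke
    (N : ℕ) (A : Fin N → Fin N → Bool) (hA : Aperiodic A)
    (θ : ℝ) (hθ0 : 0 < θ) (hθ1 : θ < 1)
    (m : Measure (SigmaA N A)) [IsProbabilityMeasure m]
    (hmM : IsMarkov m) (hminv : m.map shift = m)
    {K : Type*} [MetricSpace K] [CompactSpace K] [Nonempty K]
    [MeasurableSpace K] [BorelSpace K]
    (hdiam : Metric.diam (Set.univ : Set K) = 1)
    (G : SigmaA N A × K → K) (hGm : Measurable (skew G))
    (α : ℝ) (hα0 : 0 < α) (hα1 : α < 1) (hG1 : CondG1 G α)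
    (μ : SignedMeasure (SigmaA N A × K)) (hμ : MemS m θ μ) :
    infNorm m (transfer G μ) ≤ ENNReal.ofReal α * infNorm m μ + phiSup m μ := by
  have hmeas_shift : Measurable (shift : SigmaA N A → SigmaA N A) := by
    refine Measurable.subtype_mk (measurable_pi_lambda _ fun i => ?_)
    exact (measurable_pi_apply (i + 1)).comp measurable_subtype_coe
  have hG : Measurable G := measurable_snd.comp hGm
  obtain ⟨⟨ha, hb, _, _⟩, hfin, -⟩ := hμ
  set a := jPos μ with hadef
  set b := jNeg μ with hbdef
  set p := jPos (transfer G μ) with hpdef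
  set n := jNeg (transfer G μ) with hndef
  have hpf : IsFiniteMeasure p := (transfer G μ).toJordanDecomposition.posPart_finite
  have hnf : IsFiniteMeasure n := (transfer G μ).toJordanDecomposition.negPart_finite
  have hsing : p ⟂ₘ n := (transfer G μ).toJordanDecomposition.mutuallySingular
  have hrel : p + b.map (skew G) = n + a.map (skew G) := by
    refine Measure.ext fun E hE => ?_
    have h1 : p.real E - n.real E = a.real (skew G ⁻¹' E) - b.real (skew G ⁻¹' E) := by
      have e3 : transfer G μ E = μ (skew G ⁻¹' E) := VectorMeasure.map_apply _ hGm hE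
      rw [aux_signed_apply _ hE, aux_signed_apply _ (hGm hE)] at e3
      exact e3
    have h2 : (p + b.map (skew G)).real E = (n + a.map (skew G)).real E := by
      rw [measureReal_add_apply, measureReal_add_apply, map_measureReal_apply hGm hE,
        map_measureReal_apply hGm hE]
      linarith
    exact (measureReal_eq_measureReal_iff).1 h2
  have hfst : ∀ ν : Measure (SigmaA N A × K), ν.fst ≪ m → (ν.map (skew G)).fst ≪ m := by
    intro ν hν
    have : (ν.map (skew G)).fst = ν.fst.map shift := by
      rw [Measure.fst, Measure.fst, Measure.map_map measurable_fst hGm,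
        Measure.map_map hmeas_shift measurable_fst]
      rfl
    rw [this]
    conv_rhs => rw [← hminv]
    exact hν.map hmeas_shift
  have hp : p.fst ≪ m :=
    ((aux_le_of_add_eq hrel hsing).absolutelyContinuous.map measurable_fst).trans (hfst a ha)
  have hn : n.fst ≪ m :=
    ((aux_le_of_add_eq hrel.symm hsing.symm).absolutelyContinuous.map measurable_fst).trans
      (hfst b hb)
  by_cases hBtop : phiSup m μ = ⊤
  · simp [hBtop]
  have hCtop : infNorm m μ ≠ ⊤ := hfin.ne
  set C := (infNorm m μ).toReal with hCdef
  set B := (phiSup m μ).toReal with hBdef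
  have hC0 : 0 ≤ C := ENNReal.toReal_nonneg
  have hB0 : 0 ≤ B := ENNReal.toReal_nonneg
  have hrhs : ENNReal.ofReal α * infNorm m μ + phiSup m μ = ENNReal.ofReal (α * C + B) := by
    rw [ENNReal.ofReal_add (by positivity) hB0, ENNReal.ofReal_mul hα0.le,
      ENNReal.ofReal_toReal hCtop, ENNReal.ofReal_toReal hBtop]
  rw [hrhs]
  -- fiberwise bound for `μ`
  have hfib : ∀ᵐ x ∂m, ∀ h : K → ℝ, (∀ z, |h z| ≤ 1) →
      (∀ z w, |h z - h w| ≤ α * dist z w) →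
      |∫ z, h z ∂(fiberR m a x) - ∫ z, h z ∂(fiberR m b x)| ≤ α * C + B := by
    have hW : ∀ᵐ x ∂m, wDist (fiberR m a x) (fiberR m b x) ≤ infNorm m μ := ae_le_essSup
    have hP : ∀ᵐ x ∂m, ENNReal.ofReal |phiPair m a b x| ≤ phiSup m μ := ae_le_essSup
    filter_upwards [hW, hP, aux_fiberR_finite m a, aux_fiberR_finite m b]
      with x hx1 hx2 ⟨hx3, hx3'⟩ ⟨hx4, hx4'⟩ h hh hl
    refine aux_fiber_bound hdiam α hα0 _ _ C B ?_ hC0 ?_ h hh hl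
    · rwa [ENNReal.ofReal_toReal hCtop]
    · rw [hx3', hx4']
      exact (ENNReal.ofReal_le_iff_le_toReal hBtop).1 hx2
  -- bound for a fixed test function
  have key : ∀ g : K → ℝ, (LipschitzWith 1 g ∧ ∀ z, |g z| ≤ 1) →
      ∀ᵐ γ ∂m, |∫ z, g z ∂(fiberR m p γ) - ∫ z, g z ∂(fiberR m n γ)| ≤ α * C + B := by
    rintro g ⟨hgl, hgb⟩
    have hgm : Measurable g := hgl.continuous.measurable
    have hint : ∀ ν : Measure (SigmaA N A × K), IsFiniteMeasure ν →
        ∀ q : SigmaA N A × K → K, Measurable q → Integrable (fun x => g (q x)) ν :=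
      fun ν _ q hq => Integrable.of_bound (hgm.comp hq).aestronglyMeasurable 1
        (ae_of_all _ fun x => hgb _)
    have hIp := aux_integrable_fiber m p hp _ (hint p hpf Prod.snd measurable_snd)
    have hIn := aux_integrable_fiber m n hn _ (hint n hnf Prod.snd measurable_snd)
    have hIa := aux_integrable_fiber m a ha _ (hint a inferInstance G hG)
    have hIb := aux_integrable_fiber m b hb _ (hint b inferInstance G hG)
    have hset : ∀ E : Set (SigmaA N A), MeasurableSet E →
        |∫ γ in E, (∫ z, g z ∂(fiberR m p γ) - ∫ z, g z ∂(fiberR m n γ)) ∂m| ≤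
          (α * C + B) * m.real E := by
      intro E hE
      have hE' : MeasurableSet (shift ⁻¹' E : Set (SigmaA N A)) := hmeas_shift hE
      have e1 := aux_setIntegral_fiber m p hp _ (hint p hpf Prod.snd measurable_snd) E hE
      have e2 := aux_setIntegral_fiber m n hn _ (hint n hnf Prod.snd measurable_snd) E hE
      have e3 := aux_setIntegral_fiber m a ha _ (hint a inferInstance G hG) _ hE'
      have e4 := aux_setIntegral_fiber m b hb _ (hint b inferInstance G hG) _ hE'
      set f : SigmaA N A × K → ℝ := (Prod.fst ⁻¹' E).indicator fun x => g x.2 with hf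
      have hfm : Measurable f := (hgm.comp measurable_snd).indicator (measurable_fst hE)
      have hfi : ∀ ν : Measure (SigmaA N A × K), IsFiniteMeasure ν → Integrable f ν := fun ν hν =>
        (hint ν hν Prod.snd measurable_snd).indicator (measurable_fst hE)
      have hmap : ∀ ν : Measure (SigmaA N A × K),
          ∫ x, f x ∂(ν.map (skew G)) =
            ∫ x, (Prod.fst ⁻¹' (shift ⁻¹' E)).indicator (fun x => g (G x)) x ∂ν := by
        intro ν
        rw [integral_map hGm.aemeasurable hfm.aestronglyMeasurable]
        rfl
      have hsum : ∫ x, f x ∂p + ∫ x, f x ∂(b.map (skew G)) =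
          ∫ x, f x ∂n + ∫ x, f x ∂(a.map (skew G)) := by
        rw [← integral_add_measure (hfi _ inferInstance) (hfi _ inferInstance), hrel,
          integral_add_measure (hfi _ inferInstance) (hfi _ inferInstance)]
      have heq : ∫ γ in E, (∫ z, g z ∂(fiberR m p γ) - ∫ z, g z ∂(fiberR m n γ)) ∂m =
          ∫ x in shift ⁻¹' E,
            (∫ z, g (G (x, z)) ∂(fiberR m a x) - ∫ z, g (G (x, z)) ∂(fiberR m b x)) ∂m := by
        rw [integral_sub hIp.integrableOn hIn.integrableOn,
          integral_sub hIa.integrableOn hIb.integrableOn, e1, e2, e3, e4]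
        rw [hmap, hmap] at hsum
        linarith
      rw [heq]
      have hmE : m.real E = m.real (shift ⁻¹' E) := by
        conv_lhs => rw [← hminv]
        rw [map_measureReal_apply hmeas_shift hE]
      rw [hmE, ← Real.norm_eq_abs]
      refine norm_setIntegral_le_of_norm_le_const_ae' (measure_lt_top _ _) ?_
      filter_upwards [hfib] with x hx _
      refine hx (fun z => g (G (x, z))) (fun z => hgb _) fun z w => ?_
      calc |g (G (x, z)) - g (G (x, w))| ≤ dist (G (x, z)) (G (x, w)) := by
            simpa [Real.dist_eq] using hgl.dist_le_mul (G (x, z)) (G (x, w))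
        _ ≤ α * dist z w := hG1 x z w
    have hle1 : (fun γ => ∫ z, g z ∂(fiberR m p γ) - ∫ z, g z ∂(fiberR m n γ))
        ≤ᵐ[m] fun _ => α * C + B := by
      refine ae_le_of_forall_setIntegral_le (hIp.sub hIn) (integrable_const _) fun E hE _ => ?_
      rw [setIntegral_const, smul_eq_mul, mul_comm]
      exact (le_abs_self _).trans (hset E hE)
    have hle2 : (fun _ => -(α * C + B)) ≤ᵐ[m]
        fun γ => ∫ z, g z ∂(fiberR m p γ) - ∫ z, g z ∂(fiberR m n γ) := by
      refine ae_le_of_forall_setIntegral_le (integrable_const _) (hIp.sub hIn) fun E hE _ => ?_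
      rw [setIntegral_const, smul_eq_mul, mul_comm, neg_mul]
      exact (abs_le.1 (hset E hE)).1
    filter_upwards [hle1, hle2] with γ h1 h2
    exact abs_le.2 ⟨h2, h1⟩
  obtain ⟨D, hDc, hDl, hD⟩ := aux_exists_countable (K := K)
  have hall : ∀ᵐ γ ∂m, ∀ g ∈ D,
      |∫ z, g z ∂(fiberR m p γ) - ∫ z, g z ∂(fiberR m n γ)| ≤ α * C + B :=
    (ae_ball_iff hDc).2 fun g hg => key g (hDl g hg)
  refine essSup_le_of_ae_le _ ?_
  filter_upwards [hall, aux_fiberR_finite m p, aux_fiberR_finite m n]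
    with γ h1 ⟨h2, _⟩ ⟨h3, _⟩
  exact hD _ _ _ h1

end RDS
end
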